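/- Any permutation class C with finitely many sum-indecomposable permutations whose growth rate is greater than 1 (i.e., whose dominant growth rate γ satisfies γ > 1) exhibits a Wilf collapse. -/

import Mathlib

open Filter Asymptotics

/-- A (finite) permutation: a size `n` together with a bijection of `Fin n`,
thought of in one-line notation as the sequence `π 0, π 1, …, π (n-1)`. -/
abbrev PPerm : Type := Σ n : ℕ, Equiv.Perm (Fin n)

/-- Pattern containment: `π ≤ τ` iff `τ` has a subsequence (a strictly increasing choice
of positions) whose entries are in the same relative order as `π`. -/
def PatternLE (π τ : PPerm) : Prop :=
  ∃ g : Fin π.1 → Fin τ.1, StrictMono g ∧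
    ∀ i j : Fin π.1, π.2 i < π.2 j ↔ τ.2 (g i) < τ.2 (g j)

/-- A permutation class: a set of permutations closed downward under containment. -/
def IsPermClass (C : Set PPerm) : Prop :=
  ∀ π τ : PPerm, PatternLE π τ → τ ∈ C → π ∈ C

/-- `cnt C n` is the number `c_n` of permutations of size `n` in `C`. -/
noncomputable def cnt (C : Set PPerm) (n : ℕ) : ℕ :=
  Set.ncard {τ : PPerm | τ ∈ C ∧ τ.1 = n}

/-- The number of permutations of size `n` in `C` avoiding `α`. -/
noncomputable def avcnt (C : Set PPerm) (α : PPerm) (n : ℕ) : ℕ :=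
  Set.ncard {τ : PPerm | τ ∈ C ∧ τ.1 = n ∧ ¬ PatternLE α τ}

/-- `α` and `β` are Wilf-equivalent in `C`: for every `n`, `C` has as many size-`n`
permutations avoiding `α` as avoiding `β`. -/
def WilfEq (C : Set PPerm) (α β : PPerm) : Prop := ∀ n : ℕ, avcnt C α n = avcnt C β n

/-- `wilfcnt C n` is the number `w_n` of Wilf(-equivalence) classes formed by the
size-`n` permutations of `C`. -/
noncomputable def wilfcnt (C : Set PPerm) (n : ℕ) : ℕ :=
  Set.ncard {S : Set PPerm | ∃ α : PPerm, α ∈ C ∧ α.1 = n ∧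
    S = {β : PPerm | β ∈ C ∧ β.1 = n ∧ WilfEq C α β}}

/-- `C` has a *Wilf collapse* if `w_n = o(c_n)`. -/
def WilfCollapse (C : Set PPerm) : Prop :=
  (fun n => (wilfcnt C n : ℝ)) =o[atTop] fun n => (cnt C n : ℝ)

/-- `C` has an *exponential Wilf collapse* if `w_n = o(rⁿ·c_n)` for some `r < 1`. -/
def ExpWilfCollapse (C : Set PPerm) : Prop :=
  ∃ r : ℝ, r < 1 ∧
    (fun n => (wilfcnt C n : ℝ)) =o[atTop] fun n => r ^ n * (cnt C n : ℝ)

/-- The (direct) sum `α ⊕ β` of two permutations: `β` is placed above and to the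
right of `α`. -/
def psum (α β : PPerm) : PPerm :=
  ⟨α.1 + β.1, (finSumFinEquiv.symm.trans ((Equiv.sumCongr α.2 β.2).trans finSumFinEquiv))⟩

/-- A permutation is *sum-indecomposable* if it is nonempty and is not the sum of two
nonempty permutations. -/
def SumIndec (π : PPerm) : Prop :=
  0 < π.1 ∧ ¬ ∃ α β : PPerm, 0 < α.1 ∧ 0 < β.1 ∧ π = psum α β

/-- A set of permutations is *sum-closed* if it is closed under `⊕`. -/
def SumClosed (C : Set PPerm) : Prop :=
  ∀ α β : PPerm, α ∈ C → β ∈ C → psum α β ∈ C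


/-- Words over a finite alphabet with a containment order, as for sums of indecomposables. -/
structure WordOrd (Λ : Type) where
  sz : Λ → ℕ
  le : List Λ → List Λ → Prop
  sz_pos : ∀ a, 0 < sz a
  refl : ∀ a, le a a
  trans : ∀ a b c, le a b → le b c → le a c
  nil_le : ∀ b, le [] b
  split : ∀ a x t, le a (x :: t) ↔ ∃ a1 a2, a = a1 ++ a2 ∧ le a1 [x] ∧ le a2 t
  size_le : ∀ a b, le a b → (a.map sz).sum ≤ (b.map sz).sum
  size_eq : ∀ a b, le a b → (a.map sz).sum = (b.map sz).sum → a = b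
  unit : ∀ a, ∃ o, sz o = 1 ∧ le [o] [a]

namespace WordOrd

variable {Λ : Type} (W : WordOrd Λ)

/-- size of a word -/
def size (w : List Λ) : ℕ := (w.map W.sz).sum

@[simp] lemma size_nil : W.size [] = 0 := rfl
@[simp] lemma size_cons (a : Λ) (w : List Λ) : W.size (a :: w) = W.sz a + W.size w := by
  simp [size]
@[simp] lemma size_append (a b : List Λ) : W.size (a ++ b) = W.size a + W.size b := by
  simp [size]

lemma length_le_size (w : List Λ) : w.length ≤ W.size w := by
  induction w with
  | nil => simp
  | cons a w ih => have := W.sz_pos a; simp; omega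

lemma le_nil {a : List Λ} (h : W.le a []) : a = [] := by
  have h1 := W.size_le _ _ h
  have h2 := W.length_le_size a
  simp only [size] at h2
  simp only [List.map_nil, List.sum_nil] at h1
  exact List.length_eq_zero_iff.1 (by omega)

lemma append_le {a b c d : List Λ} (h1 : W.le a b) (h2 : W.le c d) : W.le (a ++ c) (b ++ d) := by
  induction b generalizing a with
  | nil => rw [W.le_nil h1]; simpa using h2
  | cons x b ih =>
    obtain ⟨a1, a2, rfl, h3, h4⟩ := (W.split _ _ _).1 h1
    rw [List.cons_append, W.split]
    exact ⟨a1, a2 ++ c, by simp, h3, ih h4⟩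

lemma split_append {a s t : List Λ} (h : W.le a (s ++ t)) :
    ∃ a1 a2, a = a1 ++ a2 ∧ W.le a1 s ∧ W.le a2 t := by
  induction s generalizing a with
  | nil => exact ⟨[], a, rfl, W.refl _, h⟩
  | cons x s ih =>
    rw [List.cons_append, W.split] at h
    obtain ⟨a1, a2, rfl, h3, h4⟩ := h
    obtain ⟨b1, b2, rfl, h5, h6⟩ := ih h4
    exact ⟨a1 ++ b1, b2, by simp, (W.split _ _ _).2 ⟨a1, b1, rfl, h3, h5⟩, h6⟩

lemma sublist_le {a b : List Λ} (h : a.Sublist b) : W.le a b := by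
  induction h with
  | slnil => exact W.refl _
  | cons x _ ih => exact W.append_le (W.nil_le [x]) ih
  | cons_cons x _ ih => exact W.append_le (W.refl [x]) ih

lemma le_append_right {a b : List Λ} (c : List Λ) (h : W.le a b) : W.le a (b ++ c) :=
  W.trans _ _ _ h (W.sublist_le (List.sublist_append_left _ _))
lemma le_append_left {a b : List Λ} (c : List Λ) (h : W.le a b) : W.le a (c ++ b) :=
  W.trans _ _ _ h (W.sublist_le (List.sublist_append_right _ _))

section fin
variable [Fintype Λ]

/-- bound for letter sizes -/
def M : ℕ := ∑ a, W.sz a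

lemma sz_le_M (a : Λ) : W.sz a ≤ W.M :=
  Finset.single_le_sum (f := W.sz) (fun _ _ => Nat.zero_le _) (Finset.mem_univ a)

lemma length_le_M {b : List Λ} {x : Λ} (h : W.le b [x]) : b.length ≤ W.M := by
  have h1 := W.size_le _ _ h
  have h2 := W.length_le_size b
  have h3 := W.sz_le_M x
  simp only [size] at h2
  simp at h1
  omega

lemma cut {β1 β2 t : List Λ} (h : W.le (β1 ++ β2) t) :
    ∃ ta tb b β2', t = ta ++ tb ∧ β2 = b ++ β2' ∧ b.length ≤ W.M ∧ W.le (β1 ++ b) ta ∧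
      W.le β2' tb := by
  induction t generalizing β1 with
  | nil =>
    have := W.le_nil h
    simp at this
    obtain ⟨rfl, rfl⟩ := this
    exact ⟨[], [], [], [], rfl, rfl, by simp, W.refl _, W.refl _⟩
  | cons x t ih =>
    obtain ⟨c1, c2, hc, h1, h2⟩ := (W.split _ _ _).1 h
    rcases List.append_eq_append_iff.1 hc with ⟨b, rfl, rfl⟩ | ⟨b1, rfl, rfl⟩
    · refine ⟨[x], t, b, c2, rfl, rfl, ?_, h1, h2⟩
      have := W.length_le_M h1
      simp at this; omega
    · obtain ⟨ta, tb, b, β2', rfl, rfl, h3, h4, h5⟩ := ih h2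
      exact ⟨x :: ta, tb, b, β2', rfl, rfl, h3, by
        rw [List.append_assoc]; exact W.append_le h1 h4, h5⟩
end fin

/-- lower set -/
def Lower (S : Set (List Λ)) : Prop := ∀ a b, W.le a b → b ∈ S → a ∈ S

end WordOrd

section quot
variable {Λ : Type}
/-- left quotient -/
def dq (S : Set (List Λ)) (u : List Λ) : Set (List Λ) := {v | u ++ v ∈ S}

@[simp] lemma dq_nil (S : Set (List Λ)) : dq S [] = S := rfl
lemma dq_append (S : Set (List Λ)) (u v : List Λ) : dq S (u ++ v) = dq (dq S u) v := by
  ext w; simp [dq]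
lemma dq_cons (S : Set (List Λ)) (x : Λ) (v : List Λ) : dq S (x :: v) = dq (dq S [x]) v := by
  ext w; simp [dq]
lemma mem_dq {S : Set (List Λ)} {u v : List Λ} : v ∈ dq S u ↔ u ++ v ∈ S := Iff.rfl

open Classical in
/-- loop letters -/
noncomputable def loops [Fintype Λ] (S : Set (List Λ)) : Finset Λ :=
  Finset.univ.filter (fun x => dq S [x] = S)

variable [Fintype Λ]

lemma mem_loops {S : Set (List Λ)} {x : Λ} : x ∈ loops S ↔ dq S [x] = S := by
  simp [loops]

lemma dq_loops {S : Set (List Λ)} {t : List Λ} (h : ∀ a ∈ t, a ∈ loops S) : dq S t = S := by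
  induction t with
  | nil => rfl
  | cons x t ih =>
    rw [dq_cons, mem_loops.1 (h x (by simp))]
    exact ih (fun a ha => h a (by simp [ha]))

/-- reading a word from a state -/
lemma read (L : Finset Λ) (τ : List Λ) :
    (∀ a ∈ τ, a ∈ L) ∨ ∃ t y τ', τ = t ++ y :: τ' ∧ (∀ a ∈ t, a ∈ L) ∧ y ∉ L := by
  induction τ with
  | nil => left; simp
  | cons x τ ih =>
    by_cases hx : x ∈ L
    · rcases ih with h | ⟨t, y, τ', rfl, h1, h2⟩
      · left; simpa [hx] using h
      · right; exact ⟨x :: t, y, τ', rfl, by simpa [hx] using h1, h2⟩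
    · right; exact ⟨[], x, τ, rfl, by simp, hx⟩

end quot

namespace WordOrd
variable {Λ : Type} (W : WordOrd Λ)

variable {W} in
lemma Lower.dq {S : Set (List Λ)} (h : W.Lower S) (u : List Λ) : W.Lower (dq S u) :=
  fun _ _ hab hb => h _ _ (W.append_le (W.refl u) hab) hb

variable {W} in
lemma Lower.dq_subset {S : Set (List Λ)} (h : W.Lower S) {u v : List Λ} (huv : W.le u v) :
    _root_.dq S v ⊆ _root_.dq S u :=
  fun w hw => h _ _ (W.append_le huv (W.refl w)) hw

variable {W} in
lemma Lower.dq_subset_self {S : Set (List Λ)} (h : W.Lower S) (u : List Λ) :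
    _root_.dq S u ⊆ S := h.dq_subset (W.nil_le u)

variable {W} in
lemma Lower.nil_mem {S : Set (List Λ)} (h : W.Lower S) {w : List Λ} (hw : w ∈ S) : [] ∈ S :=
  h _ _ (W.nil_le w) hw

variable [Fintype Λ]

variable {W} in
lemma Lower.loops_of_le {S : Set (List Λ)} (h : W.Lower S) {a t : List Λ} (hat : W.le a t)
    (ht : ∀ x ∈ t, x ∈ loops S) : ∀ x ∈ a, x ∈ loops S := by
  intro x hx
  rw [mem_loops]
  apply Set.Subset.antisymm (h.dq_subset_self _)
  have h1 : W.le [x] t := W.trans _ _ _ (W.sublist_le (List.singleton_sublist.2 hx)) hat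
  have h2 := h.dq_subset h1
  rwa [dq_loops ht] at h2

/-- Well-founded induction on lower sets. -/
theorem lower_induction {P : Set (List Λ) → Prop}
    (H : ∀ S, W.Lower S → (∀ x, x ∉ loops S → P (dq S [x])) → P S) :
    ∀ S, W.Lower S → P S := by
  by_contra hcon
  push Not at hcon
  have step : ∀ S : {S // W.Lower S ∧ ¬ P S}, ∃ T : {S // W.Lower S ∧ ¬ P S}, T.1 ⊂ S.1 := by
    rintro ⟨S, hS, hP⟩
    by_contra hc
    push Not at hc
    apply hP
    apply H S hS
    intro x hx
    by_contra hx'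
    refine hc ⟨dq S [x], hS.dq _, hx'⟩ ?_
    refine lt_of_le_of_ne (hS.dq_subset_self _) ?_
    rwa [mem_loops] at hx
  choose nxt hnxt using step
  obtain ⟨S0, hS0, hP0⟩ := hcon
  let f : ℕ → {S // W.Lower S ∧ ¬ P S} := fun n => Nat.rec ⟨S0, hS0, hP0⟩ (fun _ S => nxt S) n
  have hf : ∀ n, (f (n+1)).1 ⊂ (f n).1 := fun n => hnxt (f n)
  have hanti : StrictAnti (fun n => (f n).1) := strictAnti_nat_of_succ_lt hf
  have hch : ∀ n, ∃ w, w ∈ (f n).1 ∧ w ∉ (f (n+1)).1 := fun n => Set.exists_of_ssubset (hf n)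
  choose w hw1 hw2 using hch
  have hpwo : (Set.univ : Set Λ).PartiallyWellOrderedOn (Eq : Λ → Λ → Prop) :=
    Set.Finite.partiallyWellOrderedOn Set.finite_univ
  have hh := Set.PartiallyWellOrderedOn.partiallyWellOrderedOn_sublistForall₂ _ hpwo
  obtain ⟨i, j, hij, hs⟩ := hh (fun n => ⟨w n, by simp⟩)
  replace hs : List.SublistForall₂ Eq (w i) (w j) := hs
  rw [List.sublistForall₂_iff] at hs
  obtain ⟨l, hl, hl2⟩ := hs
  rw [List.forall₂_eq_eq_eq] at hl
  subst hl
  apply hw2 i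
  refine (f (i+1)).2.1 _ _ (W.sublist_le hl2) ?_
  exact hanti.antitone (Nat.succ_le_of_lt hij) (hw1 j)

end WordOrd


section
variable {Λ : Type}
/-- power of a word -/
def rep (R : List Λ) (n : ℕ) : List Λ := (List.replicate n R).flatten

@[simp] lemma rep_zero (R : List Λ) : rep R 0 = [] := by simp [rep]
lemma rep_add (R : List Λ) (m n : ℕ) : rep R (m + n) = rep R m ++ rep R n := by
  rw [rep, List.replicate_add, List.flatten_append]; rfl
@[simp] lemma rep_one (R : List Λ) : rep R 1 = R := by simp [rep]
lemma mem_rep {R : List Λ} {n : ℕ} {a : Λ} (h : a ∈ rep R n) : a ∈ R := by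
  simp only [rep, List.mem_flatten, List.mem_replicate] at h
  obtain ⟨l, ⟨_, rfl⟩, h⟩ := h
  exact h
lemma length_rep (R : List Λ) (n : ℕ) : (rep R n).length = n * R.length := by simp [rep]
lemma le_length_rep {R : List Λ} (h : R ≠ []) (n : ℕ) : n ≤ (rep R n).length := by
  rw [length_rep]
  have : 0 < R.length := List.length_pos_of_ne_nil h
  exact Nat.le_mul_of_pos_right _ this

lemma append_split_le {a b c d : List Λ} (h : a ++ b = c ++ d) (hl : c.length ≤ a.length) :
    ∃ z, a = c ++ z ∧ d = z ++ b := by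
  rcases List.append_eq_append_iff.1 h with ⟨z, rfl, rfl⟩ | ⟨z, rfl, rfl⟩
  · have : z = [] := List.length_eq_zero_iff.1 (by rw [List.length_append] at hl; omega)
    subst this
    exact ⟨[], by simp⟩
  · exact ⟨z, rfl, rfl⟩
end

namespace WordOrd
variable {Λ : Type} (W : WordOrd Λ) [Fintype Λ]

theorem embed_loop (S : Set (List Λ)) (hS : W.Lower S) :
    ∃ N, ∀ u0 R u v τ, R ≠ [] → τ ∈ dq S u0 → W.le (u ++ (rep R N ++ v)) τ →
      ∃ τ1 τ2 d e, τ = τ1 ++ τ2 ∧ rep R N = d ++ e ∧ W.le (u ++ d) τ1 ∧ W.le (e ++ v) τ2 ∧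
        ∀ a ∈ R, a ∈ loops (dq S (u0 ++ τ1)) := by
  revert S
  refine W.lower_induction ?_
  intro S hS ih
  choose! Nx hNx using ih
  set N := 1 + W.M + ∑ x, Nx x with hN
  have hNle : ∀ x, ∃ k, N = (1 + W.M) + (Nx x + k) := by
    intro x
    have : Nx x ≤ ∑ x, Nx x := Finset.single_le_sum (fun _ _ => Nat.zero_le _) (Finset.mem_univ x)
    exact ⟨N - (1 + W.M) - Nx x, by omega⟩
  refine ⟨N, ?_⟩
  intro u0 R u v τ hR hτ hle
  rcases read (loops S) u0 with hu0 | ⟨t, x, u0', rfl, ht, hx⟩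
  · -- at state S itself
    have hSu : ∀ w, dq S (u0 ++ w) = dq S w := fun w => by rw [dq_append, dq_loops hu0]
    simp only [hSu]
    rw [dq_loops hu0] at hτ
    rcases read (loops S) τ with hτL | ⟨t, x, τ', rfl, ht, hx⟩
    · obtain ⟨τa, τb, b, β, rfl, h1, h2, h3, h4⟩ := W.cut hle
      have hlen : b.length ≤ (rep R N).length := by
        have := le_length_rep hR N; omega
      obtain ⟨e, h5, h6⟩ := append_split_le h1 hlen
      refine ⟨τa, τb, b, e, rfl, h5, h3, by rwa [← h6], ?_⟩
      rw [dq_loops (fun a ha => hτL a (by simp [ha]))]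
      intro a ha
      refine hS.loops_of_le hle hτL a ?_
      have : rep R N = R ++ rep R (W.M + ∑ x, Nx x) := by
        rw [hN, add_assoc, rep_add, rep_one]
      simp [this, ha]
    · obtain ⟨a0, a', h0, hle0, hle'⟩ := W.split_append hle
      obtain ⟨y, a1, rfl, hley, hle1⟩ := (W.split _ _ _).1 hle'
      have hRN : rep R N = R ++ rep R (W.M + ∑ x, Nx x) := by
        rw [hN, add_assoc, rep_add, rep_one]
      by_cases hlen : (u ++ R).length ≤ a0.length
      · obtain ⟨z, hz, _⟩ := append_split_le (a := a0) (b := y ++ a1) (c := u ++ R)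
          (d := rep R (W.M + ∑ x, Nx x) ++ v) (by rw [← h0, hRN]; simp) hlen
        rw [hz, List.append_assoc] at hle0
        obtain ⟨ta, tb, b, β, rfl, h1, h2, h3, h4⟩ := W.cut hle0
        have hall : rep R N ++ v = b ++ (β ++ y ++ a1) := by
          have : u ++ (rep R N ++ v) = u ++ (b ++ (β ++ y ++ a1)) := by
            rw [h0, hz]
            have h1' : u ++ R ++ z = u ++ (b ++ β) := by rw [← h1]; simp
            rw [h1']; simp
          exact List.append_cancel_left this
        have hlen : b.length ≤ (rep R N).length := by
          have := le_length_rep hR N; omega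
        obtain ⟨e, h5, h6⟩ := append_split_le hall hlen
        refine ⟨ta, tb ++ x :: τ', b, e, by simp, h5, h3, ?_, ?_⟩
        · rw [← h6, List.append_assoc]
          exact W.append_le h4 hle'
        · rw [dq_loops (fun a ha => ht a (by simp [ha]))]
          intro a ha
          refine hS.loops_of_le hle0 ht a ?_
          simp [ha]
      · obtain ⟨k, hk⟩ := hNle x
        have hNk : rep R N = rep R (1 + W.M) ++ (rep R (Nx x) ++ rep R k) := by
          rw [hk, rep_add R (1 + W.M), rep_add R (Nx x)]
        have hl2 : (a0 ++ y).length ≤ (u ++ rep R (1 + W.M)).length := by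
          have h1 := W.length_le_M hley
          have h2 := le_length_rep hR W.M
          rw [rep_add, rep_one]
          simp at hlen ⊢
          omega
        obtain ⟨z, hz1, hz2⟩ := append_split_le (a := u ++ rep R (1 + W.M))
          (b := rep R (Nx x) ++ (rep R k ++ v)) (c := a0 ++ y) (d := a1) (by
            have := h0; rw [hNk] at this; simpa using this) hl2
        rw [hz2] at hle1
        have hτ' : τ' ∈ dq (dq S [x]) [] := by
          have : τ' ∈ dq S (t ++ [x]) := by rw [mem_dq]; simpa [mem_dq] using hτ
          rwa [dq_append, dq_loops ht] at this
        obtain ⟨τ1, τ2, d, e, rfl, h1, h2, h3, h4⟩ := hNx x hx [] R z (rep R k ++ v) τ' hR hτ' hle1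
        refine ⟨t ++ x :: τ1, τ2, rep R (1 + W.M) ++ d, e ++ rep R k, by simp, ?_, ?_, ?_, ?_⟩
        · rw [hNk, h1]; simp
        · have := W.append_le (W.append_le hle0 hley) h2
          rw [← List.append_assoc, hz1]
          simpa using this
        · simpa using h3
        · have : dq S (t ++ x :: τ1) = dq (dq S [x]) ([] ++ τ1) := by
            rw [dq_append, dq_loops ht, dq_cons]; rfl
          rw [this]; exact h4
  · -- deeper state
    have hst : ∀ w, dq S (t ++ x :: u0' ++ w) = dq (dq S [x]) (u0' ++ w) := by
      intro w
      rw [List.append_assoc, dq_append, dq_loops ht, List.cons_append, dq_cons]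
    obtain ⟨k, hk⟩ := hNle x
    have hNk : rep R N = rep R (Nx x) ++ rep R (1 + W.M + k) := by
      rw [← rep_add]; congr 1; omega
    have h0 := hst []
    simp only [List.append_nil] at h0
    rw [h0] at hτ
    rw [hNk, List.append_assoc] at hle
    obtain ⟨τ1, τ2, d, e, rfl, h1, h2, h3, h4⟩ := hNx x hx u0' R u _ τ hR hτ hle
    refine ⟨τ1, τ2, d, e ++ rep R (1 + W.M + k), rfl, by rw [hNk, h1]; simp, h2, by simpa using h3, ?_⟩
    rw [hst]; exact h4

end WordOrd


namespace WordOrd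
variable {Λ : Type} (W : WordOrd Λ) [Fintype Λ]

/-- weight of an alphabet -/
noncomputable def lam (g : ℝ) (L : Finset Λ) : ℝ := ∑ a ∈ L, g ^ W.sz a

/-- dominant state -/
def Dom (g : ℝ) (p : Set (List Λ)) : Prop := [] ∈ p ∧ W.lam g (loops p) = 1

/-- chains of dominant states -/
def HasChain (g : ℝ) : ℕ → Set (List Λ) → Prop
  | 0, _ => True
  | k + 1, S => ∃ u, W.Dom g (dq S u) ∧
      (k = 0 ∨ ∃ y, y ∉ loops (dq S u) ∧ HasChain g k (dq (dq S u) [y]))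

/-- words passing through `k` dominant states, each time with the factor `V`. -/
def Good (g : ℝ) (V : Finset Λ → List Λ) : ℕ → Set (List Λ) → List Λ → Prop
  | 0, _, _ => True
  | k + 1, S, α => ∃ u α', W.Dom g (dq S u) ∧ α = u ++ (V (loops (dq S u)) ++ α') ∧
      (k = 0 ∨ ∃ v x α'', α' = v ++ x :: α'' ∧ (∀ a ∈ v, a ∈ loops (dq S u)) ∧
        x ∉ loops (dq S u) ∧ Good g V k (dq (dq S u) [x]) α'')

/-- all states subcritical or critical -/
def NC (g : ℝ) (C : Set (List Λ)) : Prop := ∀ u, [] ∈ dq C u → W.lam g (loops (dq C u)) ≤ 1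

/-- property of `N` from `embed_loop` -/
def EmbN (S : Set (List Λ)) (N : ℕ) : Prop := ∀ u0 R u v τ, R ≠ [] → τ ∈ dq S u0 →
    W.le (u ++ (rep R N ++ v)) τ →
      ∃ τ1 τ2 d e, τ = τ1 ++ τ2 ∧ rep R N = d ++ e ∧ W.le (u ++ d) τ1 ∧ W.le (e ++ v) τ2 ∧
        ∀ a ∈ R, a ∈ loops (dq S (u0 ++ τ1))

variable {W} in
lemma Good.ext {g : ℝ} {V : Finset Λ → List Λ} {k : ℕ} {S : Set (List Λ)} {α : List Λ}
    (w : List Λ) (h : W.Good g V k (dq S w) α) : W.Good g V k S (w ++ α) := by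
  cases k with
  | zero => trivial
  | succ k =>
    obtain ⟨u, α', h1, h2, h3⟩ := h
    rw [← dq_append] at h1 h2 h3
    exact ⟨w ++ u, α', h1, by rw [h2]; simp, h3⟩

variable {W} in
lemma Good.ext_loops {g : ℝ} {V : Finset Λ → List Λ} {k : ℕ} {S : Set (List Λ)} {α : List Λ}
    {w : List Λ} (hw : ∀ a ∈ w, a ∈ loops S) (h : W.Good g V k S α) :
    W.Good g V k S (w ++ α) := by
  apply Good.ext
  rwa [dq_loops hw]

variable {W} in
lemma Good.mono {g : ℝ} {V V' : Finset Λ → List Λ} (Q : Finset Λ → List Λ)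
    (hQ : ∀ L, ∀ a ∈ Q L, a ∈ L) (hV : ∀ L, V L = V' L ++ Q L) {k : ℕ} {S : Set (List Λ)}
    {α : List Λ} (h : W.Good g V k S α) : W.Good g V' k S α := by
  induction k generalizing S α with
  | zero => trivial
  | succ k ih =>
    obtain ⟨u, α', h1, h2, h3⟩ := h
    refine ⟨u, Q (loops (dq S u)) ++ α', h1, by rw [h2, hV]; simp, ?_⟩
    rcases h3 with h3 | ⟨v, x, α'', h4, h5, h6, h7⟩
    · exact Or.inl h3
    · refine Or.inr ⟨Q (loops (dq S u)) ++ v, x, α'', by rw [h4]; simp, ?_, h6, ih h7⟩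
      intro a ha
      rcases List.mem_append.1 ha with ha | ha
      · exact hQ _ a ha
      · exact h5 a ha

lemma loops_eq {g : ℝ} (hg : 0 < g) {L L' : Finset Λ} (h : L ⊆ L') (h1 : W.lam g L = 1)
    (h2 : W.lam g L' ≤ 1) : L' = L := by
  by_contra hne
  have : L ⊂ L' := Finset.ssubset_iff_subset_ne.2 ⟨h, fun h => hne h.symm⟩
  have hlt : W.lam g L < W.lam g L' := by
    obtain ⟨a, ha, ha'⟩ := Finset.exists_of_ssubset this
    exact Finset.sum_lt_sum_of_subset h ha ha' (by positivity) (fun _ _ _ => by positivity)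
  linarith

lemma toList_ne_nil {g : ℝ} {L : Finset Λ} (h1 : W.lam g L = 1) : L.toList ≠ [] := by
  intro h
  rw [Finset.toList_eq_nil] at h
  subst h
  simp [lam] at h1

/-- basic block -/
noncomputable def blk (N : ℕ) (L : Finset Λ) : List Λ := rep L.toList (N + W.M)

lemma mem_blk {N : ℕ} {L : Finset Λ} {a : Λ} (h : a ∈ W.blk N L) : a ∈ L := by
  simpa using mem_rep h

theorem chain_of_good {g : ℝ} (hg : 0 < g) {C : Set (List Λ)} (hC : W.Lower C) (hNC : W.NC g C)
    {N : ℕ} (hN : W.EmbN C N) (k : ℕ) : ∀ (S0 : Set (List Λ)) (α d e u0 τ : List Λ),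
    W.Lower S0 → W.Good g (W.blk N) k S0 α → α = d ++ e → d.length ≤ W.M →
    dq C u0 ⊆ dq S0 d → τ ∈ dq C u0 → W.le e τ → W.HasChain g k (dq C u0) := by
  induction k with
  | zero => intros; trivial
  | succ k ih =>
    intro S0 α d e u0 τ hS0 hgood hα hd hsub hτ hle
    obtain ⟨u, α', hdom, hα', hrest⟩ := hgood
    set p := dq S0 u with hp
    set L := loops p with hL
    have hRne : L.toList ≠ [] := W.toList_ne_nil hdom.2
    have hRL : ∀ n, ∀ a ∈ rep L.toList n, a ∈ L := fun n a ha => by simpa using mem_rep ha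
    -- position of d
    have hblk : W.blk N L = rep L.toList W.M ++ rep L.toList N := by
      rw [blk, add_comm, rep_add]
    obtain ⟨z, hz1, hz2⟩ := append_split_le (a := u ++ rep L.toList W.M)
      (b := rep L.toList N ++ α') (c := d) (d := e) (by rw [← hα, hα', hblk]; simp) (by
        have := le_length_rep hRne W.M
        simp; omega)
    rw [hz2] at hle
    obtain ⟨τ1, τ2, d', e', rfl, h1, h2, h3, h4⟩ := hN u0 L.toList z α' τ hRne hτ hle
    set q := dq C (u0 ++ τ1) with hq
    have hqL : W.Lower q := hC.dq _
    have hτ2 : τ2 ∈ q := by rw [hq, mem_dq]; simpa [mem_dq] using hτ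
    have hLq : loops q = L := W.loops_eq hg (fun a ha => h4 a (by simpa using ha)) hdom.2
      (hNC _ (hqL.nil_mem hτ2))
    have hqdom : W.Dom g q := ⟨hqL.nil_mem hτ2, by rw [hLq]; exact hdom.2⟩
    have hq' : dq (dq C u0) τ1 = q := by rw [hq, dq_append]
    refine ⟨τ1, by rw [hq']; exact hqdom, ?_⟩
    rw [hq']
    rcases hrest with hk | ⟨v, x, α'', rfl, hv, hx, hgood'⟩
    · exact Or.inl hk
    right
    rcases read (loops q) τ2 with hall | ⟨t, y, τ4, rfl, ht, hy⟩
    · exfalso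
      apply hx
      rw [← hLq]
      exact hqL.loops_of_le h3 hall x (by simp)
    refine ⟨y, hy, ?_⟩
    obtain ⟨a0, a', h0, hle0, hle'⟩ := W.split_append h3
    obtain ⟨b, a1, rfl, hleb, hle1⟩ := (W.split _ _ _).1 hle'
    have ha0 : ∀ a ∈ a0, a ∈ L := by rw [← hLq]; exact hqL.loops_of_le hle0 ht
    have h0' : (e' ++ v) ++ x :: α'' = a0 ++ (b ++ a1) := by rw [← h0]; simp
    have hlen : a0.length ≤ (e' ++ v).length := by
      by_contra hcon
      push Not at hcon
      obtain ⟨z', hz', hz''⟩ := append_split_le h0'.symm hcon.le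
      cases z' with
      | nil => rw [hz'] at hcon; simp at hcon
      | cons c z' =>
        rw [List.cons_append] at hz''
        injection hz'' with hc _
        exact hx (ha0 x (by rw [hz', hc]; simp))
    obtain ⟨a0', ha0', hba⟩ := append_split_le h0' hlen
    have he' : ∀ a ∈ e' ++ v, a ∈ L := by
      intro a ha
      rcases List.mem_append.1 ha with ha | ha
      · exact hRL N a (by rw [h1]; simp [ha])
      · exact hv a ha
    have hd' : ∀ a ∈ d', a ∈ L := fun a ha => hRL N a (by rw [h1]; simp [ha])
    have hG : W.Good g (W.blk N) k p (a0' ++ ([x] ++ α'')) := by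
      apply Good.ext_loops
      · intro a ha
        exact he' a (by rw [ha0']; simp [ha])
      · exact Good.ext [x] hgood'
    have hq2 : dq q [y] = dq C (u0 ++ τ1 ++ t ++ [y]) := by
      rw [dq_append, dq_append _ (u0 ++ τ1) t, ← hq, dq_loops ht]
    rw [hq2]
    refine ih p _ b a1 _ τ4 (hS0.dq _) hG ?_ (W.length_le_M hleb) ?_ ?_ hle1
    · rw [hba]; simp
    · intro w hw
      have hw1 : τ1 ++ t ++ [y] ++ w ∈ dq C u0 := by
        rw [mem_dq] at hw ⊢; simpa using hw
      have hw2 := hsub hw1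
      have hw3 : d ++ ((z ++ d') ++ a0 ++ b ++ w) ∈ S0 := by
        refine hS0 _ _ (W.append_le (W.refl d) ?_) hw2
        exact W.append_le (W.append_le (W.append_le h2 hle0) hleb) (W.refl w)
      have hw4 : w ∈ dq (dq p (rep L.toList W.M ++ d' ++ a0)) b := by
        rw [← dq_append, hp, ← dq_append, mem_dq]
        have : d ++ (z ++ d' ++ a0 ++ b ++ w) = (d ++ z) ++ (d' ++ a0 ++ b ++ w) := by simp
        rw [this, ← hz1] at hw3
        simpa using hw3
      rwa [dq_loops (t := rep L.toList W.M ++ d' ++ a0)] at hw4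
      intro a ha
      simp only [List.mem_append] at ha
      rcases ha with (ha | ha) | ha
      · exact hRL _ a ha
      · exact hd' a ha
      · exact ha0 a ha
    · rw [mem_dq]; rw [hq, mem_dq] at hτ2; simpa using hτ2

theorem stay {g : ℝ} (hg : 0 < g) {C : Set (List Λ)} (hC : W.Lower C) (hNC : W.NC g C)
    {N : ℕ} (hN : W.EmbN C N) {D : ℕ} (hch : ¬ W.HasChain g (D + 1) C)
    {u b η G τ σ : List Λ} (hdom : W.Dom g (dq C u)) (hG : W.Good g (W.blk N) D (dq C u) G)
    (hb : ∀ a ∈ b, a ∈ loops (dq C u)) (hη : ∀ a ∈ η, a ∈ loops (dq C u))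
    (hτσ : τ ++ σ ∈ C) (h1 : W.le (u ++ (rep (loops (dq C u)).toList N ++ b)) τ)
    (h2 : W.le (η ++ G) σ) :
    loops (dq C τ) = loops (dq C u) ∧ ∃ s σ' η' ζ, σ = s ++ σ' ∧
      (∀ a ∈ s, a ∈ loops (dq C u)) ∧ W.le (η ++ η') s ∧ G = η' ++ ζ ∧ W.le ζ σ' := by
  set p := dq C u with hp
  set L := loops p with hL
  have hRne : L.toList ≠ [] := W.toList_ne_nil hdom.2
  have hRL : ∀ n, ∀ a ∈ rep L.toList n, a ∈ L := fun n a ha => by simpa using mem_rep ha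
  have hτC : τ ∈ dq C [] := hC _ _ (W.le_append_right σ (W.refl τ)) hτσ
  obtain ⟨τ1, τ2, d', e', rfl, h3, h4, h5, h6⟩ := hN [] L.toList u b τ hRne hτC h1
  simp only [List.nil_append] at h6
  set q := dq C τ1 with hq
  have hqL : W.Lower q := hC.dq _
  have hτ2 : τ2 ++ σ ∈ q := by rw [hq, mem_dq]; simpa using hτσ
  have hLq : loops q = L := W.loops_eq hg (fun a ha => h6 a (by simpa using ha)) hdom.2
      (hNC _ (hqL.nil_mem hτ2))
  have hqdom : W.Dom g q := ⟨hqL.nil_mem hτ2, by rw [hLq]; exact hdom.2⟩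
  have hd' : ∀ a ∈ d', a ∈ L := fun a ha => hRL N a (by rw [h3]; simp [ha])
  have he' : ∀ a ∈ e', a ∈ L := fun a ha => hRL N a (by rw [h3]; simp [ha])
  have heb : ∀ a ∈ e' ++ b, a ∈ L := by
    intro a ha
    rcases List.mem_append.1 ha with ha | ha
    · exact he' a ha
    · exact hb a ha
  -- contradiction principle
  have key : ∀ (t : List Λ) (y : Λ) (τ4 c bb a1 : List Λ), (∀ a ∈ t, a ∈ loops q) →
      y ∉ loops q → t ++ y :: τ4 ∈ q → (∀ a ∈ c, a ∈ L) → W.le (c ++ bb) (t ++ [y]) →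
      W.Good g (W.blk N) D p (bb ++ a1) → bb.length ≤ W.M → W.le a1 τ4 → False := by
    intro t y τ4 c bb a1 ht hy hmem hc hle hgd hbb hle1
    have hq2 : dq q [y] = dq C (τ1 ++ t ++ [y]) := by
      rw [dq_append, dq_append _ τ1 t, ← hq, dq_loops ht]
    apply hch
    refine ⟨τ1, hqdom, Or.inr ⟨y, hy, ?_⟩⟩
    rw [← hq, hq2]
    refine W.chain_of_good hg hC hNC hN D p _ bb a1 _ τ4 (hC.dq _) hgd rfl hbb ?_ ?_ hle1
    · intro w hw
      have hw1 : u ++ d' ++ (c ++ bb) ++ w ∈ C := by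
        refine hC _ _ ?_ hw
        rw [List.append_assoc τ1]
        exact W.append_le (W.append_le h4 hle) (W.refl w)
      have hw4 : w ∈ dq (dq p (d' ++ c)) bb := by
        rw [← dq_append, hp, ← dq_append, mem_dq]
        simpa using hw1
      rwa [dq_loops (t := d' ++ c)] at hw4
      intro a ha
      rcases List.mem_append.1 ha with ha | ha
      · exact hd' a ha
      · exact hc a ha
    · rw [mem_dq]; rw [hq, mem_dq] at hmem; simpa using hmem
  rcases read (loops q) (τ2 ++ σ) with hall | ⟨t, y, τ4, hty, ht, hy⟩
  · refine ⟨?_, σ, [], G, [], by simp, ?_, h2, by simp, W.refl _⟩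
    · rw [dq_append, ← hq, dq_loops (fun a ha => hall a (by simp [ha])), hLq]
    · intro a ha; rw [← hLq]; exact hall a (by simp [ha])
  rw [hty] at hτ2
  by_cases hlen : τ2.length ≤ t.length
  · obtain ⟨s, rfl, hs⟩ := append_split_le hty.symm hlen
    have hsL : ∀ a ∈ s, a ∈ L := by intro a ha; rw [← hLq]; exact ht a (by simp [ha])
    refine ⟨?_, ?_⟩
    · rw [dq_append, ← hq, dq_loops (fun a ha => ht a (by simp [ha])), hLq]
    rw [hs] at h2
    obtain ⟨a0, a', h0, hle0, hle'⟩ := W.split_append h2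
    by_cases hl2 : η.length ≤ a0.length
    · obtain ⟨η', rfl, hG'⟩ := append_split_le h0.symm hl2
      exact ⟨s, y :: τ4, η', a', hs, hsL, hle0, hG', hle'⟩
    · exfalso
      push Not at hl2
      obtain ⟨η'', rfl, hη''⟩ := append_split_le h0 hl2.le
      obtain ⟨b1, a1, rfl, hleb, hle1⟩ := (W.split _ _ _).1 hle'
      refine key _ y τ4 (e' ++ b ++ a0) b1 a1 ht hy hτ2 ?_ ?_ ?_ (W.length_le_M hleb) hle1
      · intro a ha
        rcases List.mem_append.1 ha with ha | ha
        · exact heb a ha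
        · exact hη a (by simp [ha])
      · exact W.append_le (W.append_le h5 hle0) hleb
      · rw [hη'']
        exact Good.ext_loops (fun a ha => hη a (by simp [ha])) hG
  · exfalso
    push Not at hlen
    obtain ⟨z, hz1, hz2⟩ := append_split_le hty hlen.le
    cases z with
    | nil => rw [hz1] at hlen; simp at hlen
    | cons y' τ2' =>
      rw [List.cons_append] at hz2
      injection hz2 with hy' hτ4
      subst hy'
      rw [hz1] at h5
      obtain ⟨a0, a', h0, hle0, hle'⟩ := W.split_append h5
      obtain ⟨b1, a2, rfl, hleb, hle1⟩ := (W.split _ _ _).1 hle'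
      have h0L : ∀ a ∈ a0 ++ (b1 ++ a2), a ∈ L := by rw [← h0]; exact heb
      refine key t y τ4 (a0 ++ b1) [] (a2 ++ (η ++ G)) ht hy hτ2 ?_ ?_ ?_ (by simp) ?_
      · intro a ha
        apply h0L
        rw [← List.append_assoc]; exact List.mem_append_left _ ha
      · rw [List.append_nil]; exact W.append_le hle0 hleb
      · refine Good.ext_loops (w := a2) (fun a ha => h0L a (by simp [ha])) ?_
        exact Good.ext_loops hη hG
      · rw [hτ4]; exact W.append_le hle1 h2

end WordOrd


namespace WordOrd
variable {Λ : Type} (W : WordOrd Λ) [Fintype Λ]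

lemma max_split {L : Finset Λ} {m : Λ} (hm : ∀ a ∈ L, W.sz a ≤ W.sz m) {w z s : List Λ}
    (hs : ∀ a ∈ s, a ∈ L) (h : W.le (w ++ m :: z) s) :
    ∃ s1 s2, s = s1 ++ m :: s2 ∧ W.le w s1 ∧ W.le z s2 := by
  induction s generalizing w with
  | nil => have := W.le_nil h; simp at this
  | cons a s ih =>
    obtain ⟨c1, c2, hc, h1, h2⟩ := (W.split _ _ _).1 h
    by_cases hl : c1.length ≤ w.length
    · obtain ⟨w', rfl, hw'⟩ := append_split_le hc hl
      rw [hw'] at h2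
      obtain ⟨s1, s2, rfl, h3, h4⟩ := ih (fun a ha => hs a (by simp [ha])) h2
      exact ⟨a :: s1, s2, rfl, (W.split _ _ _).2 ⟨c1, w', rfl, h1, h3⟩, h4⟩
    · push Not at hl
      obtain ⟨z', rfl, hz'⟩ := append_split_le hc.symm hl.le
      cases z' with
      | nil => simp at hl
      | cons m' z1 =>
        rw [List.cons_append] at hz'
        injection hz' with hm' hz
        subst hm'
        have hsz := W.size_le _ _ h1
        have h5 := hm a (hs a (by simp))
        have h6 := W.length_le_size w
        have h7 := W.length_le_size z1
        simp only [size] at h6 h7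
        simp at hsz
        have hw : w = [] := List.length_eq_zero_iff.1 (by omega)
        have hz1 : z1 = [] := List.length_eq_zero_iff.1 (by omega)
        subst hw hz1
        simp at hz
        subst hz
        have := W.size_eq _ _ h1 (by simp; simp at hsz; omega)
        simp at this
        subst this
        exact ⟨[], s, rfl, W.refl _, h2⟩

/-- minimal prefix containing `β` -/
def MinP (β t : List Λ) : Prop := W.le β t ∧ ∀ t', t' <+: t → W.le β t' → t' = t

lemma exists_minP {β t : List Λ} (h : W.le β t) : ∃ t', t' <+: t ∧ W.MinP β t' := by
  induction hn : t.length using Nat.strong_induction_on generalizing t with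
  | _ n ih =>
    by_cases hmin : W.MinP β t
    · exact ⟨t, List.prefix_refl _, hmin⟩
    · simp only [MinP, not_and, not_forall] at hmin
      obtain ⟨t', hp, hle, hne⟩ := hmin h
      have hlt : t'.length < n := by
        rw [← hn]
        exact lt_of_le_of_ne hp.length_le (fun he => hne (hp.eq_of_length he))
      obtain ⟨t'', h1, h2⟩ := ih _ hlt hle rfl
      exact ⟨t'', h1.trans hp, h2⟩

variable {W} in
lemma MinP.unique {β t t' a b : List Λ} (h : W.MinP β t) (h' : W.MinP β t')
    (he : t ++ a = t' ++ b) : t = t' := by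
  rcases le_total t.length t'.length with hl | hl
  · exact h'.2 _ (List.prefix_of_prefix_length_le ⟨a, rfl⟩ ⟨b, he.symm⟩ hl) h.1
  · exact (h.2 _ (List.prefix_of_prefix_length_le ⟨b, rfl⟩ ⟨a, he⟩ hl) h'.1).symm

/-- words of `C` of size `n` containing `α` -/
def cont (C : Set (List Λ)) (α : List Λ) (n : ℕ) : Set (List Λ) :=
  {τ | τ ∈ C ∧ W.size τ = n ∧ W.le α τ}

section swap

lemma structure_of_le {g : ℝ} (hg : 0 < g) {C : Set (List Λ)} (hC : W.Lower C) (hNC : W.NC g C)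
    {N : ℕ} (hN : W.EmbN C N) {D : ℕ} (hch : ¬ W.HasChain g (D + 1) C)
    {u G : List Λ} (hdom : W.Dom g (dq C u)) (hG : W.Good g (W.blk N) D (dq C u) G)
    {m : Λ} (hmL : m ∈ loops (dq C u)) (hm : ∀ a ∈ loops (dq C u), W.sz a ≤ W.sz m) (i : ℕ)
    {ε τ : List Λ} (hε : ∀ a ∈ ε, a ∈ loops (dq C u)) (hτ : τ ∈ C)
    (hle : W.le ((u ++ (W.blk N (loops (dq C u)) ++ (List.replicate i m ++ [m]))) ++
      (ε ++ m :: G)) τ) :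
    ∃ τm s σ' η' ζ, τ = τm ++ (s ++ σ') ∧
      W.MinP (u ++ (W.blk N (loops (dq C u)) ++ (List.replicate i m ++ [m]))) τm ∧
      loops (dq C τm) = loops (dq C u) ∧ (∀ a ∈ s, a ∈ loops (dq C u)) ∧
      W.le (ε ++ m :: η') s ∧ G = η' ++ ζ ∧ W.le ζ σ' := by
  set L := loops (dq C u) with hL
  set β := u ++ (W.blk N L ++ (List.replicate i m ++ [m])) with hβ
  have hRne : L.toList ≠ [] := W.toList_ne_nil hdom.2
  have hRL : ∀ n, ∀ a ∈ rep L.toList n, a ∈ L := fun n a ha => by simpa using mem_rep ha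
  have hrepm : ∀ k, ∀ a ∈ List.replicate k m, a ∈ L := by
    intro k a ha; rw [List.eq_of_mem_replicate ha]; exact hmL
  have hβ' : β = u ++ (rep L.toList N ++ (rep L.toList W.M ++ (List.replicate i m ++ [m]))) := by
    rw [hβ, blk, rep_add]; simp
  -- first a clean cut
  have hcl : ∃ τ' σ'', τ = τ' ++ σ'' ∧ W.le β τ' ∧ W.le (ε ++ m :: G) σ'' := by
    have hle' : W.le ((u ++ rep L.toList N) ++ (rep L.toList W.M ++ (List.replicate i m ++ m ::
        (ε ++ m :: G)))) τ := by
      rw [hβ'] at hle; simpa using hle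
    obtain ⟨τa, τb, b, β2, rfl, h1, h2, h3, h4⟩ := W.cut hle'
    obtain ⟨b', hb1, hb2⟩ := append_split_le h1 (by
      have := le_length_rep hRne W.M; omega)
    have hbb : ∀ a ∈ b ++ b', a ∈ L := by rw [← hb1]; exact hRL _
    have h4' : W.le ((b' ++ List.replicate i m ++ m :: ε) ++ (m :: G)) τb := by
      rw [hb2] at h4; simpa using h4
    obtain ⟨_, s, σ', η', ζ, rfl, hs, hle1, hG', hle2⟩ := W.stay hg hC hNC hN hch hdom
      (b := b) (η := b' ++ List.replicate i m ++ m :: ε) (G := m :: G) (τ := τa) (σ := τb)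
      (by exact Good.ext_loops (w := [m]) (by simpa using hmL) hG)
      (fun a ha => hbb a (by simp [ha]))
      (by
        intro a ha
        simp only [List.mem_append, List.mem_cons] at ha
        rcases ha with (ha | ha) | ha | ha
        · exact hbb a (by simp [ha])
        · exact hrepm _ a ha
        · rw [ha]; exact hmL
        · exact hε a ha) hτ (by simpa using h3) h4'
    have hle1' : W.le ((b' ++ List.replicate i m) ++ m :: (ε ++ η')) s := by simpa using hle1
    obtain ⟨s1, s2, rfl, h5, h6⟩ := W.max_split hm hs hle1'
    refine ⟨τa ++ (s1 ++ [m]), s2 ++ σ', by simp, ?_, ?_⟩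
    · have := W.append_le h3 (W.append_le h5 (W.refl [m]))
      rw [hβ', hb1]; simpa using this
    · rw [hG', ← List.append_assoc]
      exact W.append_le h6 hle2
  obtain ⟨τ', σ'', rfl, hβτ, hσ⟩ := hcl
  obtain ⟨τm, ⟨r, rfl⟩, hmin⟩ := W.exists_minP hβτ
  have h1 : W.le ((ε ++ [m]) ++ G) (r ++ σ'') := by
    rw [List.append_assoc]; exact W.le_append_left r hσ
  obtain ⟨h2, s, σ', η', ζ, h3, hs, hle1, hG', hle2⟩ := W.stay hg hC hNC hN hch hdom
      (b := rep L.toList W.M ++ (List.replicate i m ++ [m])) (η := ε ++ [m]) (G := G) (τ := τm)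
      (σ := r ++ σ'') hG
      (by
        intro a ha
        simp only [List.mem_append, List.mem_singleton] at ha
        rcases ha with ha | ha | ha
        · exact hRL _ a ha
        · exact hrepm _ a ha
        · rw [ha]; exact hmL)
      (by
        intro a ha
        simp only [List.mem_append, List.mem_singleton] at ha
        rcases ha with ha | ha
        · exact hε a ha
        · rw [ha]; exact hmL) (by simpa using hτ) (by rw [← hβ']; exact hmin.1) h1
  refine ⟨τm, s, σ', η', ζ, by rw [← h3]; simp, hmin, h2, hs, by simpa using hle1, hG', hle2⟩

theorem swap_card {g : ℝ} (hg : 0 < g) {C : Set (List Λ)} (hC : W.Lower C) (hNC : W.NC g C)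
    {N : ℕ} (hN : W.EmbN C N) {D : ℕ} (hch : ¬ W.HasChain g (D + 1) C)
    {u G : List Λ} (hdom : W.Dom g (dq C u)) (hG : W.Good g (W.blk N) D (dq C u) G)
    {m : Λ} (hmL : m ∈ loops (dq C u)) (hm : ∀ a ∈ loops (dq C u), W.sz a ≤ W.sz m) (i : ℕ)
    {o : Λ} (hoL : o ∈ loops (dq C u)) (ho1 : W.sz o = 1)
    (hole : ∀ a ∈ loops (dq C u), W.le [o] [a]) (n : ℕ) :
    (W.cont C ((u ++ (W.blk N (loops (dq C u)) ++ (List.replicate i m ++ [m]))) ++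
      ([o, m] ++ m :: G)) n).ncard =
    (W.cont C ((u ++ (W.blk N (loops (dq C u)) ++ (List.replicate i m ++ [m]))) ++
      ([m, o] ++ m :: G)) n).ncard := by
  have hst := fun ε τ => W.structure_of_le hg hC hNC hN hch hdom hG hmL hm i (ε := ε) (τ := τ)
  set L := loops (dq C u) with hL
  set β := u ++ (W.blk N L ++ (List.replicate i m ++ [m])) with hβ
  let Y : Set (List Λ × Λ × List Λ × List Λ) := {x | W.MinP β x.1 ∧ loops (dq C x.1) = L ∧
    x.2.1 ∈ L ∧ (∀ a ∈ x.2.2.1, a ∈ L) ∧ m ∉ x.2.2.1 ∧ x.2.2.2 ∈ dq C x.1 ∧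
    W.le (m :: G) x.2.2.2 ∧
    W.size x.1 + W.sz x.2.1 + W.size x.2.2.1 + W.sz m + W.size x.2.2.2 = n}
  let f1 : List Λ × Λ × List Λ × List Λ → List Λ := fun x =>
    x.1 ++ (x.2.1 :: (x.2.2.1 ++ m :: x.2.2.2))
  let f2 : List Λ × Λ × List Λ × List Λ → List Λ := fun x =>
    x.1 ++ (x.2.2.1 ++ m :: (x.2.1 :: x.2.2.2))
  have first : ∀ s s' r r' : List Λ, m ∉ s → m ∉ s' → s ++ m :: r = s' ++ m :: r' →
      s = s' ∧ r = r' := by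
    intro s
    induction s with
    | nil =>
      intro s' r r' _ hs' h
      cases s' with
      | nil => simpa using h
      | cons a s' => simp at h hs'; exact absurd h.1 hs'.1
    | cons b s ih =>
      intro s' r r' hs hs' h
      cases s' with
      | nil => simp at h hs; exact absurd h.1.symm hs.1
      | cons a s' =>
        simp at h hs hs'
        obtain ⟨h1, h2⟩ := ih s' r r' hs.2 hs'.2 h.2
        exact ⟨by rw [h.1, h1], h2⟩
  have inj1 : Set.InjOn f1 Y := by
    rintro ⟨t, a, s, r⟩ h ⟨t', a', s', r'⟩ h' he
    have h1 := MinP.unique h.1 h'.1 he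
    simp only at h1
    subst h1
    have he2 := List.append_cancel_left he
    simp only at he2
    injection he2 with h2 h3
    obtain ⟨h4, h5⟩ := first _ _ _ _ h.2.2.2.2.1 h'.2.2.2.2.1 h3
    simp only at h4 h5
    rw [h2, h4, h5]
  have inj2 : Set.InjOn f2 Y := by
    rintro ⟨t, a, s, r⟩ h ⟨t', a', s', r'⟩ h' he
    have h1 := MinP.unique h.1 h'.1 he
    simp only at h1
    subst h1
    have he2 := List.append_cancel_left he
    obtain ⟨h4, h5⟩ := first _ _ _ _ h.2.2.2.2.1 h'.2.2.2.2.1 he2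
    simp only at h4 h5
    injection h5 with h2 h3
    rw [h2, h4, h3]
  have locc : ∀ s : List Λ, m ∈ s → ∃ s1 s2, s = s1 ++ m :: s2 ∧ m ∉ s1 := by
    intro s
    induction s with
    | nil => simp
    | cons b s ih =>
      intro h
      by_cases hb : m = b
      · exact ⟨[], s, by rw [hb]; rfl, by simp⟩
      · obtain ⟨s1, s2, rfl, h1⟩ := ih (by simpa [hb] using h)
        exact ⟨b :: s1, s2, rfl, by simp [hb, h1]⟩
  have mm : ∀ s z : List Λ, (∀ a ∈ s, a ∈ L) → W.le (m :: z) s → ∃ s1 s2, s = s1 ++ m :: s2 ∧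
      m ∉ s1 ∧ W.le z s2 := by
    intro s z hs h
    obtain ⟨s1, s2, rfl, _, h2⟩ := W.max_split hm (w := []) hs h
    obtain ⟨s3, s4, h3, h4⟩ := locc (s1 ++ [m]) (by simp)
    refine ⟨s3, s4 ++ s2, ?_, h4, W.le_append_left _ h2⟩
    have : s1 ++ m :: s2 = (s1 ++ [m]) ++ s2 := by simp
    rw [this, h3]; simp
  have oo : ∀ s z : List Λ, (∀ a ∈ s, a ∈ L) → W.le (o :: m :: z) s → ∃ a s', s = a :: s' ∧
      W.le (m :: z) s' := by
    intro s z hs h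
    cases s with
    | nil => have := W.le_nil h; simp at this
    | cons a s =>
      refine ⟨a, s, rfl, ?_⟩
      obtain ⟨c1, c2, hc, h1, h2⟩ := (W.split _ _ _).1 h
      cases c1 with
      | nil =>
        simp at hc
        subst hc
        exact W.trans _ _ _ (W.sublist_le (List.sublist_cons_self _ _)) h2
      | cons x c1 =>
        cases c1 with
        | nil => simp at hc; rw [hc.2]; exact h2
        | cons y c1 =>
          exfalso
          simp at hc
          have h3 := W.size_le _ _ h1
          have h4 := hm a (hs a (by simp))
          rw [← hc.1, ← hc.2.1] at h3
          simp at h3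
          omega
  have im1 : W.cont C (β ++ ([o, m] ++ m :: G)) n = f1 '' Y := by
    ext τ
    constructor
    · rintro ⟨hτC, hτn, hle⟩
      obtain ⟨τm, s, σ', η', ζ, rfl, h1, h2, h3, h4, h5, h6⟩ := hst [o, m] τ (by
        intro a ha; simp at ha; rcases ha with rfl | rfl <;> assumption) hτC hle
      obtain ⟨a, s', rfl, h7⟩ := oo _ _ h3 h4
      obtain ⟨s1, s2, rfl, h8, h9⟩ := mm _ _ (fun b hb => h3 b (by simp [hb])) h7
      refine ⟨(τm, a, s1, s2 ++ σ'), ⟨h1, h2, h3 a (by simp), fun b hb => h3 b (by simp [hb]), h8,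
        ?_, ?_, ?_⟩, by simp [f1]⟩
      · rw [show dq C τm = dq (dq C τm) (a :: (s1 ++ [m])) from (dq_loops (by
          rw [h2]; intro b hb; apply h3; simp at hb ⊢; tauto)).symm]
        rw [mem_dq, mem_dq]; simpa using hτC
      · rw [h5]; exact W.append_le h9 h6
      · simp at hτn ⊢; omega
    · rintro ⟨⟨t, a, s, r⟩, ⟨h1, h2, h3, h4, h5, h6, h7, h8⟩, rfl⟩
      simp only at h1 h2 h3 h4 h5 h6 h7 h8
      refine ⟨?_, ?_, ?_⟩
      · have : r ∈ dq (dq C t) (a :: (s ++ [m])) := by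
          rw [dq_loops]; exact h6
          rw [h2]; intro b hb; simp at hb
          rcases hb with rfl | hb | rfl
          · exact h3
          · exact h4 _ hb
          · exact hmL
        rw [mem_dq, mem_dq] at this
        simpa [f1] using this
      · simp [f1]; omega
      · refine W.append_le h1.1 (W.append_le (b := [a]) (a := [o]) (hole a h3) ?_)
        exact W.le_append_left s (W.append_le (W.refl [m]) h7)
  have im2 : W.cont C (β ++ ([m, o] ++ m :: G)) n = f2 '' Y := by
    ext τ
    constructor
    · rintro ⟨hτC, hτn, hle⟩
      obtain ⟨τm, s, σ', η', ζ, rfl, h1, h2, h3, h4, h5, h6⟩ := hst [m, o] τ (by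
        intro a ha; simp at ha; rcases ha with rfl | rfl <;> assumption) hτC hle
      obtain ⟨s1, s', rfl, h8, h7⟩ := mm _ _ h3 h4
      obtain ⟨a, s2, rfl, h9⟩ := oo _ _ (fun b hb => h3 b (by simp [hb])) h7
      refine ⟨(τm, a, s1, s2 ++ σ'), ⟨h1, h2, h3 a (by simp), fun b hb => h3 b (by simp [hb]), h8,
        ?_, ?_, ?_⟩, by simp [f2]⟩
      · rw [show dq C τm = dq (dq C τm) (s1 ++ [m, a]) from (dq_loops (by
          rw [h2]; intro b hb; apply h3; simp at hb ⊢; tauto)).symm]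
        rw [mem_dq, mem_dq]; simpa using hτC
      · rw [h5]; exact W.append_le h9 h6
      · simp at hτn ⊢; omega
    · rintro ⟨⟨t, a, s, r⟩, ⟨h1, h2, h3, h4, h5, h6, h7, h8⟩, rfl⟩
      simp only at h1 h2 h3 h4 h5 h6 h7 h8
      refine ⟨?_, ?_, ?_⟩
      · have : r ∈ dq (dq C t) (s ++ [m, a]) := by
          rw [dq_loops]; exact h6
          rw [h2]; intro b hb; simp at hb
          rcases hb with hb | rfl | rfl
          · exact h4 _ hb
          · exact hmL
          · exact h3
        rw [mem_dq, mem_dq] at this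
        simpa [f2] using this
      · simp [f2]; omega
      · refine W.append_le h1.1 (W.le_append_left s ?_)
        exact W.append_le (W.refl [m]) (W.append_le (a := [o]) (b := [a]) (hole a h3) h7)
  rw [im1, im2, Set.ncard_image_of_injOn inj1, Set.ncard_image_of_injOn inj2]

end swap
end WordOrd


set_option linter.all false
namespace WordOrd
variable {Λ : Type} (W : WordOrd Λ) [Fintype Λ]

/-- a letter of maximal size and the letter of size one -/
def Nice (L : Finset Λ) (m o : Λ) : Prop := m ∈ L ∧ o ∈ L ∧ m ≠ o ∧ (∀ a ∈ L, W.sz a ≤ W.sz m) ∧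
  W.sz o = 1 ∧ ∀ a ∈ L, W.le [o] [a]

lemma unit_unique {o a : Λ} (ho : W.sz o = 1) (ha : W.sz a = 1) (h : W.le [o] [a]) : o = a := by
  have := W.size_eq _ _ h (by simp [ho, ha])
  simpa using this

/-- small lemma: there is a unique letter of size one below all -/
def OneUnit : Prop := ∀ o o' : Λ, W.sz o = 1 → W.sz o' = 1 → o = o'

lemma unit_mem (hO : W.OneUnit) {S : Set (List Λ)} (hS : W.Lower S) (hne : (loops S).Nonempty) :
    ∃ o ∈ loops S, W.sz o = 1 ∧ ∀ a, W.le [o] [a] := by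
  obtain ⟨a, ha⟩ := hne
  obtain ⟨o, h1, h2⟩ := W.unit a
  refine ⟨o, hS.loops_of_le h2 (by simpa using ha) o (by simp), h1, ?_⟩
  intro b
  obtain ⟨o', h3, h4⟩ := W.unit b
  rwa [hO o o' h1 h3]

lemma exists_nice (hO : W.OneUnit) {g : ℝ} (hg1 : g < 1) {p : Set (List Λ)}
    (hp : W.Lower p) (hd : W.Dom g p) : ∃ m o, W.Nice (loops p) m o := by
  have hne : (loops p).Nonempty := by
    rw [Finset.nonempty_iff_ne_empty]
    intro h
    have := hd.2
    simp [lam, h] at this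
  obtain ⟨o, ho, ho1, hole⟩ := W.unit_mem hO hp hne
  obtain ⟨m, hm, hmax⟩ := Finset.exists_max_image (loops p) W.sz hne
  refine ⟨m, o, hm, ho, ?_, hmax, ho1, fun a _ => hole a⟩
  rintro rfl
  have hall : loops p = {m} := by
    ext a
    simp only [Finset.mem_singleton]
    constructor
    · intro ha
      have h1 := hmax a ha
      have h2 := W.sz_pos a
      exact hO _ _ (by omega) ho1
    · rintro rfl; exact hm
  have := hd.2
  simp [lam, hall, ho1] at this
  linarith

/-- the swapping word -/
def Uw (m o : Λ) (K j : ℕ) : List Λ := List.replicate j m ++ [m] ++ (o :: List.replicate (K + 1 - j) m)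

open Classical in
/-- second part of the big block -/
noncomputable def Qb (K N : ℕ) (L : Finset Λ) : List Λ :=
  if h : ∃ m o, W.Nice L m o then Uw h.choose h.choose_spec.choose K 0 ++ W.blk N L else []

/-- the big block -/
noncomputable def Vb (K N : ℕ) (L : Finset Λ) : List Λ := W.blk N L ++ W.Qb K N L

lemma mem_Uw {L : Finset Λ} {m o : Λ} (hm : m ∈ L) (ho : o ∈ L) {K j : ℕ} {a : Λ}
    (h : a ∈ Uw m o K j) : a ∈ L := by
  simp only [Uw, List.mem_append, List.mem_replicate, List.mem_cons, List.mem_singleton] at h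
  aesop

lemma mem_Qb {K N : ℕ} {L : Finset Λ} : ∀ a ∈ W.Qb K N L, a ∈ L := by
  intro a ha
  unfold Qb at ha
  split_ifs at ha with h
  · have hn := h.choose_spec.choose_spec
    rcases List.mem_append.1 ha with ha | ha
    · exact mem_Uw hn.1 hn.2.1 ha
    · exact W.mem_blk ha
  · simp at ha

lemma mem_Vb {K N : ℕ} {L : Finset Λ} : ∀ a ∈ W.Vb K N L, a ∈ L := by
  intro a ha
  rcases List.mem_append.1 ha with ha | ha
  · exact W.mem_blk ha
  · exact W.mem_Qb a ha

lemma rep_inj_aux {m o : Λ} (h : m ≠ o) : ∀ {i j : ℕ} {x y : List Λ},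
    List.replicate i m ++ o :: x = List.replicate j m ++ o :: y → i = j := by
  intro i
  induction i with
  | zero =>
    intro j x y he
    cases j with
    | zero => rfl
    | succ j => simp [List.replicate_succ] at he; exact absurd he.1.symm h
  | succ i ih =>
    intro j x y he
    cases j with
    | zero => simp [List.replicate_succ] at he; exact absurd he.1 h
    | succ j =>
      simp only [List.replicate_succ, List.cons_append, List.cons.injEq, true_and] at he
      rw [ih he]

lemma Uw_inj {m o : Λ} (h : m ≠ o) {K i j : ℕ} (w : List Λ)
    (he : Uw m o K i ++ w = Uw m o K j ++ w) : i = j := by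
  have he := List.append_cancel_right he
  simp only [Uw, ← List.replicate_succ'] at he
  have := rep_inj_aux h he
  omega

theorem good_many (hO : W.OneUnit) {g : ℝ} (hg : 0 < g) (hg1 : g < 1) {C : Set (List Λ)}
    (hC : W.Lower C) (hNC : W.NC g C)
    {N : ℕ} (hN : W.EmbN C N) {D : ℕ} (hD : 0 < D) (hch : ¬ W.HasChain g (D + 1) C) (K : ℕ)
    {α : List Λ} (hα : α ∈ C) (hG : W.Good g (W.Vb K N) D C α) :
    ∃ f : ℕ → List Λ, Set.InjOn f {j | j ≤ K} ∧ ∀ j ≤ K, f j ∈ C ∧ W.size (f j) = W.size α ∧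
      ∀ n, (W.cont C (f j) n).ncard = (W.cont C α n).ncard := by
  obtain ⟨D, rfl⟩ : ∃ D', D = D' + 1 := ⟨D - 1, by omega⟩
  have hG' : W.Good g (W.blk N) (D+1) C α := hG.mono (W.Qb K N) (fun _ => W.mem_Qb) (fun _ => rfl)
  clear hG'
  obtain ⟨u, α', hdom, h2, h3⟩ := hG
  have hp := hC.dq u
  have hex := W.exists_nice hO hg1 hp hdom
  set L := loops (dq C u) with hL
  obtain ⟨m, o, hn, hV⟩ : ∃ m o, W.Nice L m o ∧
      W.Vb K N L = W.blk N L ++ (Uw m o K 0 ++ W.blk N L) := by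
    refine ⟨hex.choose, hex.choose_spec.choose, hex.choose_spec.choose_spec, ?_⟩
    rw [Vb, Qb, dif_pos hex]
  obtain ⟨hmL, hoL, hmo, hmax, ho1, hole⟩ := hn
  have hG0 : W.Good g (W.blk N) (D+1) (dq C u) (W.blk N L ++ α') := by
    refine ⟨[], α', by simpa using hdom, by simp [hL], ?_⟩
    rcases h3 with h3 | ⟨v, x, α'', h4, h5, h6, h7⟩
    · exact Or.inl h3
    · exact Or.inr ⟨v, x, α'', h4, by simpa using h5, by simpa using h6,
        by simpa using h7.mono (W.Qb K N) (fun _ => W.mem_Qb) (fun _ => rfl)⟩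
  let f : ℕ → List Λ := fun j => u ++ (W.blk N L ++ (Uw m o K j ++ (W.blk N L ++ α')))
  have hf0 : f 0 = α := by rw [h2, hV]; simp [f]
  have hstep : ∀ j, j < K → ∀ n, (W.cont C (f j) n).ncard = (W.cont C (f (j+1)) n).ncard := by
    intro j hj n
    have := W.swap_card hg hC hNC hN hch hdom (G := List.replicate (K - 1 - j) m ++ (W.blk N L ++ α'))
      (Good.ext_loops (fun a ha => by rw [List.eq_of_mem_replicate ha]; exact hmL) hG0) hmL hmax j
      hoL ho1 hole n
    rw [← hL] at this
    convert this using 3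
    · have : K + 1 - j = (K - 1 - j) + 1 + 1 := by omega
      simp [f, Uw, this, List.replicate_succ]
    · have : K + 1 - (j + 1) = (K - 1 - j) + 1 := by omega
      simp only [f, Uw, this]
      rw [List.replicate_succ' (n := j)]
      simp [List.replicate_succ]
  refine ⟨f, ?_, ?_⟩
  · intro i hi j hj hij
    have := List.append_cancel_left (List.append_cancel_left hij)
    exact Uw_inj hmo _ this
  · intro j hj
    refine ⟨?_, ?_, ?_⟩
    · have h1 : dq (dq C u) (W.blk N L ++ Uw m o K j) = dq (dq C u) (W.blk N L ++ Uw m o K 0) := by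
        rw [dq_loops (S := dq C u), dq_loops (S := dq C u)]
        · intro a ha
          rcases List.mem_append.1 ha with ha | ha
          · exact W.mem_blk ha
          · exact mem_Uw hmL hoL ha
        · intro a ha
          rcases List.mem_append.1 ha with ha | ha
          · exact W.mem_blk ha
          · exact mem_Uw hmL hoL ha
      have h4 : W.blk N L ++ α' ∈ dq (dq C u) (W.blk N L ++ Uw m o K 0) := by
        rw [mem_dq, mem_dq]
        rw [← hf0] at hα
        simpa [f] using hα
      rw [← h1, mem_dq, mem_dq] at h4
      simpa [f] using h4
    · rw [← hf0]
      have : ∀ j ≤ K, W.size (Uw m o K j) = (K + 2) * W.sz m + W.sz o := by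
        intro j hj
        simp only [Uw, size, List.map_append, List.map_replicate, List.map_cons, List.sum_append,
          List.sum_replicate, List.sum_cons, List.map_nil, List.sum_nil, smul_eq_mul]
        obtain ⟨r, rfl⟩ : ∃ r, K = j + r := ⟨K - j, by omega⟩
        have : j + r + 1 - j = r + 1 := by omega
        rw [this]; ring
      simp [f, this j hj, this 0 (by omega)]
    · intro n
      rw [← hf0]
      clear hf0
      induction j with
      | zero => rfl
      | succ j ih => rw [← hstep j (by omega) n]; exact ih (by omega)
end WordOrd


set_option linter.all false
namespace WordOrd
open scoped ENNReal
variable {Λ : Type} (W : WordOrd Λ) [Fintype Λ]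

/-- weight of a word -/
noncomputable def ww (g : ℝ) (w : List Λ) : ℝ≥0∞ := ENNReal.ofReal (g ^ W.size w)

/-- total weight of a set of words -/
noncomputable def TT (g : ℝ) (A : Set (List Λ)) : ℝ≥0∞ := ∑' w : A, W.ww g w

/-- restrict to a size -/
def lev (A : Set (List Λ)) (n : ℕ) : Set (List Λ) := {w | w ∈ A ∧ W.size w = n}

/-- concatenation -/
def cat (A B : Set (List Λ)) : Set (List Λ) := {w | ∃ a ∈ A, ∃ b ∈ B, w = a ++ b}

section basic
variable {g : ℝ} (hg : 0 < g)

lemma ww_append (hg : 0 < g) (a b : List Λ) : W.ww g (a ++ b) = W.ww g a * W.ww g b := by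
  rw [ww, ww, ww, ← ENNReal.ofReal_mul (by positivity), size_append, pow_add]

lemma ww_nil : W.ww g [] = 1 := by simp [ww]

lemma ww_le_one (hg0 : 0 < g) (hg1 : g < 1) (w : List Λ) : W.ww g w ≤ 1 := by
  rw [ww, ENNReal.ofReal_le_one]
  exact pow_le_one₀ hg0.le hg1.le

lemma TT_mono {A B : Set (List Λ)} (h : A ⊆ B) : W.TT g A ≤ W.TT g B :=
  ENNReal.tsum_mono_subtype _ h

lemma TT_union (A B : Set (List Λ)) : W.TT g (A ∪ B) ≤ W.TT g A + W.TT g B :=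
  ENNReal.tsum_union_le _ _ _

lemma TT_biUnion {ι : Type} (s : Finset ι) (A : ι → Set (List Λ)) :
    W.TT g (⋃ i ∈ s, A i) ≤ ∑ i ∈ s, W.TT g (A i) :=
  ENNReal.tsum_biUnion_le _ _ _

lemma TT_iUnion {ι : Type} (A : ι → Set (List Λ)) :
    W.TT g (⋃ i, A i) ≤ ∑' i, W.TT g (A i) :=
  ENNReal.tsum_iUnion_le_tsum _ _

lemma TT_empty : W.TT g ∅ = 0 := by simp [TT]

lemma TT_singleton (w : List Λ) : W.TT g {w} = W.ww g w := by simp [TT]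

lemma TT_cat (hg : 0 < g) (A B : Set (List Λ)) : W.TT g (cat A B) ≤ W.TT g A * W.TT g B := by
  have hs : Function.Surjective (fun x : A × B => (⟨x.1.1 ++ x.2.1, x.1.1, x.1.2, x.2.1, x.2.2, rfl⟩ : cat A B)) := by
    rintro ⟨w, a, ha, b, hb, rfl⟩
    exact ⟨(⟨a, ha⟩, ⟨b, hb⟩), rfl⟩
  calc W.TT g (cat A B) ≤ ∑' x : A × B, W.ww g (x.1.1 ++ x.2.1) :=
        ENNReal.tsum_le_tsum_comp_of_surjective hs (fun w => W.ww g w.1)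
    _ = ∑' (a : A) (b : B), W.ww g a.1 * W.ww g b.1 := by
        rw [ENNReal.tsum_prod']
        simp_rw [W.ww_append hg]
    _ = W.TT g A * W.TT g B := by
        simp_rw [ENNReal.tsum_mul_left, ENNReal.tsum_mul_right]
        rfl

lemma TT_cons (hg : 0 < g) (x : Λ) (B : Set (List Λ)) : W.TT g (List.cons x '' B) ≤ W.ww g [x] * W.TT g B := by
  rw [← TT_singleton]
  refine le_trans (W.TT_mono ?_) (W.TT_cat hg _ _)
  rintro _ ⟨b, hb, rfl⟩
  exact ⟨[x], rfl, b, hb, rfl⟩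

lemma TT_lev_sum (A : Set (List Λ)) (n : ℕ) :
    ∑ i ∈ Finset.range (n+1), W.TT g (W.lev A i) ≤ W.TT g A := by
  have : ∀ s : Finset ℕ, ∑ i ∈ s, W.TT g (W.lev A i) = W.TT g (⋃ i ∈ s, W.lev A i) := by
    intro s
    unfold TT
    rw [Summable.tsum_finset_bUnion_disjoint (f := W.ww g)]
    · intro i _ j _ hij
      rw [Function.onFun, Set.disjoint_left]
      rintro w ⟨_, h1⟩ ⟨_, h2⟩
      exact hij (h1.symm.trans h2)
    · intro i _; exact ENNReal.summable
  rw [this]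
  apply W.TT_mono
  intro w hw
  simp only [Set.mem_iUnion] at hw
  obtain ⟨i, _, hw⟩ := hw
  exact hw.1

lemma TT_lev_cat (hg : 0 < g) (A B : Set (List Λ)) (n : ℕ) : W.TT g (W.lev (cat A B) n) ≤
    ∑ x ∈ Finset.HasAntidiagonal.antidiagonal n, W.TT g (W.lev A x.1) * W.TT g (W.lev B x.2) := by
  refine le_trans (W.TT_mono (B := ⋃ x ∈ Finset.HasAntidiagonal.antidiagonal n, cat (W.lev A x.1) (W.lev B x.2)) ?_) ?_
  · rintro _ ⟨⟨a, ha, b, hb, rfl⟩, h⟩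
    simp only [Set.mem_iUnion]
    rw [size_append] at h
    exact ⟨(W.size a, W.size b), by simpa using h, a, ⟨ha, rfl⟩, b, ⟨hb, rfl⟩, rfl⟩
  · refine (W.TT_biUnion _ _).trans (Finset.sum_le_sum fun x _ => W.TT_cat hg _ _)
end basic

/-- growth bounds -/
def Bd (g : ℝ) : ℕ → Set (List Λ) → Prop
  | 0, A => W.TT g A ≠ ⊤
  | j + 1, A => ∃ K : ℝ≥0∞, K ≠ ⊤ ∧ ∀ n : ℕ, W.TT g (W.lev A n) ≤ K * ((n : ℝ≥0∞) + 1) ^ j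

section bd
variable {g : ℝ} (hg : 0 < g) (hg1 : g < 1) {W}

lemma Bd.mono {k : ℕ} {A B : Set (List Λ)} (h : W.Bd g k B) (hs : A ⊆ B) : W.Bd g k A := by
  cases k with
  | zero => exact ne_top_of_le_ne_top h (W.TT_mono hs)
  | succ k =>
    obtain ⟨K, hK, h⟩ := h
    exact ⟨K, hK, fun n => (W.TT_mono (A := W.lev A n) (B := W.lev B n) (fun w hw => ⟨hs hw.1, hw.2⟩)).trans (h n)⟩

lemma Bd.union {k : ℕ} {A B : Set (List Λ)} (hA : W.Bd g k A) (hB : W.Bd g k B) :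
    W.Bd g k (A ∪ B) := by
  cases k with
  | zero => exact ne_top_of_le_ne_top (ENNReal.add_ne_top.2 ⟨hA, hB⟩) (W.TT_union _ _)
  | succ k =>
    obtain ⟨K, hK, h⟩ := hA
    obtain ⟨K', hK', h'⟩ := hB
    refine ⟨K + K', ENNReal.add_ne_top.2 ⟨hK, hK'⟩, fun n => ?_⟩
    rw [add_mul]
    refine le_trans (le_trans (W.TT_mono ?_) (W.TT_union _ _)) (add_le_add (h n) (h' n))
    rintro w ⟨hw | hw, h⟩
    · exact Or.inl ⟨hw, h⟩
    · exact Or.inr ⟨hw, h⟩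

lemma Bd.empty {k : ℕ} : W.Bd g k ∅ := by
  cases k with
  | zero => simp [Bd, TT_empty]
  | succ k =>
    refine ⟨0, by simp, fun n => ?_⟩
    have : W.lev (∅ : Set (List Λ)) n = ∅ := by ext; simp [lev]
    simp [this, TT_empty]

lemma Bd.biUnion {ι : Type} {k : ℕ} (s : Finset ι) {A : ι → Set (List Λ)}
    (h : ∀ i ∈ s, W.Bd g k (A i)) : W.Bd g k (⋃ i ∈ s, A i) := by
  classical
  induction s using Finset.induction_on with
  | empty => simpa using Bd.empty
  | insert i s hi ih =>
    rw [Finset.set_biUnion_insert]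
    exact (h i (by simp)).union (ih fun j hj => h j (by simp [hj]))

lemma Bd.of_zero {k : ℕ} {A : Set (List Λ)} (h : W.Bd g 0 A) : W.Bd g k A := by
  cases k with
  | zero => exact h
  | succ k =>
    refine ⟨W.TT g A, h, fun n => ?_⟩
    refine (W.TT_mono (fun w hw => hw.1)).trans ?_
    have : (1 : ℝ≥0∞) ≤ ((n : ℝ≥0∞) + 1) ^ k := one_le_pow₀ (by simp)
    calc W.TT g A = W.TT g A * 1 := by simp
      _ ≤ _ := by gcongr

lemma Bd.of_one {j : ℕ} {A : Set (List Λ)} (h : W.Bd g 1 A) : W.Bd g (j+1) A := by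
  obtain ⟨K, hK, h⟩ := h
  refine ⟨K, hK, fun n => (h n).trans ?_⟩
  have : (1 : ℝ≥0∞) ≤ ((n : ℝ≥0∞) + 1) ^ j := one_le_pow₀ (by simp)
  rw [pow_zero]
  gcongr

lemma Bd.cat_zero (hg : 0 < g) {k : ℕ} {A B : Set (List Λ)} (hA : W.Bd g 0 A) (hB : W.Bd g k B) :
    W.Bd g k (cat A B) := by
  cases k with
  | zero => exact ne_top_of_le_ne_top (ENNReal.mul_ne_top hA hB) (W.TT_cat hg _ _)
  | succ k =>
    obtain ⟨K, hK, h⟩ := hB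
    refine ⟨W.TT g A * K, ENNReal.mul_ne_top hA hK, fun n => (W.TT_lev_cat hg _ _ _).trans ?_⟩
    calc ∑ x ∈ Finset.HasAntidiagonal.antidiagonal n, W.TT g (W.lev A x.1) * W.TT g (W.lev B x.2)
        ≤ ∑ x ∈ Finset.HasAntidiagonal.antidiagonal n, W.TT g (W.lev A x.1) * (K * ((n : ℝ≥0∞) + 1) ^ k) := by
          apply Finset.sum_le_sum
          intro x hx
          refine mul_le_mul_right ((h x.2).trans ?_) _
          have : x.2 ≤ n := by rw [Finset.HasAntidiagonal.mem_antidiagonal] at hx; omega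
          gcongr
      _ = (∑ i ∈ Finset.range (n+1), W.TT g (W.lev A i)) * (K * ((n : ℝ≥0∞) + 1) ^ k) := by
          rw [← Finset.sum_mul, Finset.Nat.sum_antidiagonal_eq_sum_range_succ_mk]
      _ ≤ W.TT g A * K * ((n : ℝ≥0∞) + 1) ^ k := by
          rw [mul_assoc]; exact mul_le_mul_left (W.TT_lev_sum _ _) _

lemma Bd.cat_one (hg : 0 < g) {k : ℕ} {A B : Set (List Λ)} (hA : W.Bd g 1 A) (hB : W.Bd g k B) :
    W.Bd g (k+1) (cat A B) := by
  obtain ⟨K', hK', h'⟩ := hA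
  simp only [pow_zero, mul_one] at h'
  cases k with
  | zero =>
    refine ⟨K' * W.TT g B, ENNReal.mul_ne_top hK' hB, fun n => (W.TT_lev_cat hg _ _ _).trans ?_⟩
    calc ∑ x ∈ Finset.HasAntidiagonal.antidiagonal n, W.TT g (W.lev A x.1) * W.TT g (W.lev B x.2)
        ≤ ∑ x ∈ Finset.HasAntidiagonal.antidiagonal n, K' * W.TT g (W.lev B x.2) := by
          apply Finset.sum_le_sum
          intro x hx
          exact mul_le_mul_left (h' _) _
      _ = K' * (∑ i ∈ Finset.range (n+1), W.TT g (W.lev B i)) := by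
          rw [← Finset.mul_sum, Finset.Nat.sum_antidiagonal_eq_sum_range_succ_mk]
          rw [← Finset.sum_range_reflect (fun i => W.TT g (W.lev B i))]
          simp
      _ ≤ _ := by
          rw [pow_zero, mul_one]
          exact mul_le_mul_right (W.TT_lev_sum _ _) _
  | succ k =>
    obtain ⟨K, hK, h⟩ := hB
    refine ⟨K' * K, ENNReal.mul_ne_top hK' hK, fun n => (W.TT_lev_cat hg _ _ _).trans ?_⟩
    calc ∑ x ∈ Finset.HasAntidiagonal.antidiagonal n, W.TT g (W.lev A x.1) * W.TT g (W.lev B x.2)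
        ≤ ∑ x ∈ Finset.HasAntidiagonal.antidiagonal n, K' * (K * ((n : ℝ≥0∞) + 1) ^ k) := by
          apply Finset.sum_le_sum
          intro x hx
          refine mul_le_mul' (h' _) ((h x.2).trans ?_)
          have : x.2 ≤ n := by rw [Finset.HasAntidiagonal.mem_antidiagonal] at hx; omega
          gcongr
      _ ≤ _ := by
          rw [Finset.sum_const, Finset.Nat.card_antidiagonal, nsmul_eq_mul, pow_succ]
          push_cast
          apply le_of_eq; ring

lemma Bd.cons (hg : 0 < g) (hg1 : g < 1) {k : ℕ} {B : Set (List Λ)} (x : Λ) (hB : W.Bd g k B) :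
    W.Bd g k (List.cons x '' B) := by
  have : List.cons x '' B ⊆ cat {[x]} B := by
    rintro _ ⟨b, hb, rfl⟩
    exact ⟨[x], rfl, b, hb, rfl⟩
  refine Bd.mono (Bd.cat_zero hg ?_ hB) this
  rw [Bd, TT_singleton, ww]
  simp
end bd

/-- words over `L` -/
def Lst (L : Finset Λ) : Set (List Λ) := {w | ∀ a ∈ w, a ∈ L}

section lst
variable {g : ℝ} (hg : 0 < g) {L : Finset Λ}

lemma sum_ww (hg : 0 < g) : ∑ a ∈ L, W.ww g [a] = ENNReal.ofReal (W.lam g L) := by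
  rw [lam, ENNReal.ofReal_sum_of_nonneg (fun _ _ => by positivity)]
  simp [ww]

lemma TT_len (hg : 0 < g) (s : ℕ) : W.TT g {w | w ∈ Lst L ∧ w.length = s} ≤ ENNReal.ofReal (W.lam g L) ^ s := by
  induction s with
  | zero =>
    refine (W.TT_mono (B := {[]}) ?_).trans ?_
    · rintro w ⟨_, hw⟩; simpa using hw
    · rw [TT_singleton, ww_nil]; simp
  | succ s ih =>
    refine (W.TT_mono (B := ⋃ a ∈ L, List.cons a '' {w | w ∈ Lst L ∧ w.length = s}) ?_).trans ?_
    · rintro w ⟨hw, hl⟩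
      cases w with
      | nil => simp at hl
      | cons a w =>
        simp only [Set.mem_iUnion]
        exact ⟨a, hw a (by simp), w, ⟨fun b hb => hw b (by simp [hb]), by simpa using hl⟩, rfl⟩
    · refine (W.TT_biUnion _ _).trans ?_
      calc _ ≤ ∑ a ∈ L, W.ww g [a] * ENNReal.ofReal (W.lam g L) ^ s :=
            Finset.sum_le_sum fun a _ => (W.TT_cons hg _ _).trans (mul_le_mul_right ih _)
        _ = _ := by rw [← Finset.sum_mul, W.sum_ww hg, pow_succ']

lemma Lst_zero (hg : 0 < g) (h : W.lam g L < 1) : W.Bd g 0 (Lst L) := by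
  refine ne_top_of_le_ne_top ?_ ((W.TT_mono (B := ⋃ s : ℕ, {w | w ∈ Lst L ∧ w.length = s}) ?_).trans
    ((W.TT_iUnion _).trans (ENNReal.tsum_le_tsum (fun s => W.TT_len hg s))))
  · rw [ENNReal.tsum_geometric]
    rw [ENNReal.inv_ne_top, ← pos_iff_ne_zero, tsub_pos_iff_lt, ENNReal.ofReal_lt_one]
    exact h
  · intro w hw
    simp only [Set.mem_iUnion]
    exact ⟨w.length, hw, rfl⟩

lemma Lst_one (hg : 0 < g) (h : W.lam g L ≤ 1) : W.Bd g 1 (Lst L) := by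
  refine ⟨1, by simp, fun n => ?_⟩
  simp only [pow_zero, mul_one]
  induction n using Nat.strong_induction_on with
  | _ n ih =>
  rcases Nat.eq_zero_or_pos n with rfl | hn
  · refine (W.TT_mono (B := {[]}) ?_).trans ?_
    · rintro w ⟨_, hw⟩
      have := W.length_le_size w
      rw [hw] at this
      simpa using this
    · rw [TT_singleton, ww_nil]
  · refine (W.TT_mono (B := ⋃ a ∈ L, List.cons a '' W.lev (Lst L) (n - W.sz a)) ?_).trans ?_
    · rintro w ⟨hw, hl⟩
      cases w with
      | nil => simp at hl; omega
      | cons a w =>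
        simp only [Set.mem_iUnion]
        rw [size_cons] at hl
        exact ⟨a, hw a (by simp), w, ⟨fun b hb => hw b (by simp [hb]), by omega⟩, rfl⟩
    · refine (W.TT_biUnion _ _).trans ?_
      calc _ ≤ ∑ a ∈ L, W.ww g [a] * 1 :=
            Finset.sum_le_sum fun a _ => (W.TT_cons hg _ _).trans (mul_le_mul_right (ih _ (by
              have := W.sz_pos a; omega)) _)
        _ ≤ 1 := by
            simp only [mul_one]
            rw [W.sum_ww hg, ENNReal.ofReal_le_one]; exact h

/-- words over `L` avoiding the factor `V` -/
def Avo (L : Finset Λ) (V : List Λ) : Set (List Λ) := {w | w ∈ Lst L ∧ ¬ V <:+: w}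

lemma Avo_zero (hg : 0 < g) (h : W.lam g L = 1) {V : List Λ} (hV : V ≠ []) (hVL : V ∈ Lst L) :
    W.Bd g 0 (Avo L V) := by
  set t := V.length with ht
  have htpos : 0 < t := List.length_pos_iff.2 hV
  set X : Set (List Λ) := {w | (w ∈ Lst L ∧ w.length = t) ∧ w ≠ V}
  set ρ := W.TT g X with hρ
  have hρ1 : ρ < 1 := by
    have h1 := W.TT_len hg (L := L) t
    rw [h] at h1
    simp only [ENNReal.ofReal_one, one_pow] at h1
    have h2 : W.TT g ({V} ∪ X) = W.TT g {V} + W.TT g X := by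
      unfold TT
      apply Summable.tsum_union_disjoint
      · rw [Set.disjoint_left]; rintro w hw hw'; exact hw'.2 hw
      · exact ENNReal.summable
      · exact ENNReal.summable
    have h3 : W.TT g ({V} ∪ X) ≤ 1 := by
      refine (W.TT_mono ?_).trans h1
      rintro w (hw | hw)
      · rw [Set.mem_singleton_iff.1 hw]; exact ⟨hVL, rfl⟩
      · exact hw.1
    rw [h2, TT_singleton] at h3
    have h4 : 0 < W.ww g V := by rw [ww, ENNReal.ofReal_pos]; positivity
    have h5 : ρ ≠ ⊤ := ne_top_of_le_ne_top (by simp) (le_trans le_add_self h3)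
    calc ρ < W.ww g V + ρ := by
          rw [add_comm]; exact ENNReal.lt_add_right h5 h4.ne'
      _ ≤ 1 := h3
  set A : ℕ → Set (List Λ) := fun q => {w | w ∈ Avo L V ∧ q * t ≤ w.length ∧ w.length < (q+1) * t}
  have hA : ∀ q, W.TT g (A q) ≤ t * ρ ^ q := by
    intro q
    induction q with
    | zero =>
      refine (W.TT_mono (B := ⋃ s ∈ Finset.range t, {w | w ∈ Lst L ∧ w.length = s}) ?_).trans ?_
      · rintro w ⟨hw, _, hl⟩
        simp only [Set.mem_iUnion]
        exact ⟨w.length, by simpa using hl, hw.1, rfl⟩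
      · refine (W.TT_biUnion _ _).trans ?_
        calc _ ≤ ∑ s ∈ Finset.range t, (1 : ℝ≥0∞) := Finset.sum_le_sum fun s _ => by
              have := W.TT_len hg (L := L) s
              rw [h] at this; simpa using this
          _ = _ := by simp
    | succ q ih =>
      refine (W.TT_mono (B := cat X (A q)) ?_).trans ((W.TT_cat hg _ _).trans ?_)
      · rintro w ⟨⟨hw, hav⟩, h1, h2⟩
        have hlen : t ≤ w.length := by nlinarith
        refine ⟨w.take t, ⟨⟨fun a ha => hw a (List.mem_of_mem_take ha), by simpa using hlen⟩, ?_⟩,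
          w.drop t, ⟨⟨fun a ha => hw a (List.mem_of_mem_drop ha), ?_⟩, ?_, ?_⟩, by simp⟩
        · intro he
          exact hav ⟨[], w.drop t, by rw [← he]; simp⟩
        · rintro ⟨x, y, hxy⟩
          exact hav ⟨w.take t ++ x, y, by rw [List.append_assoc, List.append_assoc, ← List.append_assoc x, hxy]; simp⟩
        · rw [List.length_drop]; rw [add_mul] at h1; omega
        · rw [List.length_drop]; rw [add_mul] at h2; omega
      · calc ρ * W.TT g (A q) ≤ ρ * (t * ρ ^ q) := mul_le_mul_right ih _
          _ = _ := by ring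
  refine ne_top_of_le_ne_top ?_ ((W.TT_mono (B := ⋃ q : ℕ, A q) ?_).trans
    ((W.TT_iUnion _).trans (ENNReal.tsum_le_tsum hA)))
  · rw [ENNReal.tsum_mul_left, ENNReal.tsum_geometric]
    refine ENNReal.mul_ne_top (by simp) ?_
    rw [ENNReal.inv_ne_top, ← pos_iff_ne_zero, tsub_pos_iff_lt]
    exact hρ1
  · intro w hw
    simp only [Set.mem_iUnion]
    refine ⟨w.length / t, hw, Nat.div_mul_le_self _ _, ?_⟩
    exact Nat.lt_mul_of_div_lt (Nat.lt_succ_self _) htpos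
end lst

theorem bad_bound {g : ℝ} (hg : 0 < g) (hg1 : g < 1) {V : Finset Λ → List Λ}
    (hV1 : ∀ L, ∀ a ∈ V L, a ∈ L) (hV2 : ∀ L, W.lam g L = 1 → V L ≠ []) :
    ∀ S, W.Lower S → W.NC g S → ∀ k, W.Bd g k {α | α ∈ S ∧ ¬ W.Good g V (k+1) S α} := by
  refine W.lower_induction ?_
  intro S hS ih hNC k
  by_cases hnil : [] ∈ S
  swap
  · refine Bd.mono Bd.empty ?_
    rintro w ⟨hw, _⟩
    exact hnil (hS.nil_mem hw)
  have hlam : W.lam g (loops S) ≤ 1 := hNC [] hnil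
  have ih' : ∀ x, x ∉ loops S → ∀ k, W.Bd g k {α | α ∈ dq S [x] ∧ ¬ W.Good g V (k+1) (dq S [x]) α} := by
    intro x hx
    refine ih x hx ?_
    intro u hu
    rw [← dq_append] at hu ⊢
    exact hNC _ hu
  set L := loops S with hL
  set Bad : Λ → ℕ → Set (List Λ) := fun x k => {α | α ∈ dq S [x] ∧ ¬ W.Good g V (k+1) (dq S [x]) α}
    with hBad
  classical
  have hd : ∀ t y, (∀ a ∈ t, a ∈ L) → dq S (t ++ [y]) = dq S [y] := by
    intro t y ht
    rw [dq_append, dq_loops ht]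
  have hmem : ∀ t y τ', (∀ a ∈ t, a ∈ L) → t ++ y :: τ' ∈ S → τ' ∈ dq S [y] := by
    intro t y τ' ht h
    rw [← hd t y ht, mem_dq]; simpa using h
  have hbad : ∀ t y τ', (∀ a ∈ t, a ∈ L) → t ++ y :: τ' ∈ S → ¬ W.Good g V (k+1) S (t ++ y :: τ') →
      τ' ∈ Bad y k := by
    intro t y τ' ht h hn
    refine ⟨hmem t y τ' ht h, fun hG => hn ?_⟩
    rw [← hd t y ht] at hG
    simpa using Good.ext _ hG
  have hfin : ∀ (X : Set (List Λ)) (j k' : ℕ), (∀ x, x ∉ L → W.Bd g k' (cat X (List.cons x '' Bad x j))) →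
      W.Bd g k' (⋃ x ∈ (Finset.univ.filter (fun x => x ∉ L)), cat X (List.cons x '' Bad x j)) := by
    intro X j k' h
    apply Bd.biUnion
    intro i hi
    exact h i (by simpa using hi)
  rcases lt_or_eq_of_le hlam with hlt | heq
  · refine Bd.mono (Bd.union (Bd.of_zero (W.Lst_zero hg hlt)) (hfin (Lst L) k k (fun x hx =>
      Bd.cat_zero hg (W.Lst_zero hg hlt) (Bd.cons hg hg1 x (ih' x hx k))))) ?_
    rintro α ⟨hα, hn⟩
    rcases read L α with hall | ⟨t, y, τ', rfl, ht, hy⟩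
    · exact Or.inl hall
    · right
      simp only [Set.mem_iUnion]
      exact ⟨y, by simpa using hy, t, ht, _, ⟨τ', hbad t y τ' ht hα hn, rfl⟩, rfl⟩
  · have hAvo := W.Avo_zero hg heq (hV2 L heq) (fun a ha => hV1 L a ha)
    have hdomS : W.Dom g S := ⟨hnil, heq⟩
    have h1 : W.Bd g k (Avo L (V L) ∪ ⋃ x ∈ (Finset.univ.filter (fun x => x ∉ L)),
        cat (Avo L (V L)) (List.cons x '' Bad x k)) :=
      Bd.union (Bd.of_zero hAvo) (hfin _ k k (fun x hx =>
        Bd.cat_zero hg hAvo (Bd.cons hg hg1 x (ih' x hx k))))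
    cases k with
    | zero =>
      refine Bd.mono h1 ?_
      rintro α ⟨hα, hn⟩
      have hni : ∀ t τ', (∀ a ∈ t, a ∈ L) → α = t ++ τ' → ¬ V L <:+: t := by
        rintro t τ' ht rfl ⟨u, v, rfl⟩
        apply hn
        have hu : dq S u = S := dq_loops (fun a ha => ht a (by simp [ha]))
        refine ⟨u, v ++ τ', by rw [hu]; exact hdomS, by rw [hu]; simp [hL], Or.inl rfl⟩
      rcases read L α with hall | ⟨t, y, τ', rfl, ht, hy⟩
      · exact Or.inl ⟨hall, hni α [] hall (by simp)⟩
      · right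
        simp only [Set.mem_iUnion]
        exact ⟨y, by simpa using hy, t, ⟨ht, hni t _ ht rfl⟩, _, ⟨τ', hbad t y τ' ht hα hn, rfl⟩, rfl⟩
    | succ k =>
      have hL1 := W.Lst_one hg hlam
      refine Bd.mono (Bd.union h1 (Bd.union (Bd.of_one hL1) (hfin (Lst L) k (k+1) (fun x hx =>
        Bd.cat_one hg hL1 (Bd.cons hg hg1 x (ih' x hx k)))))) ?_
      rintro α ⟨hα, hn⟩
      rcases read L α with hall | ⟨t, y, τ', rfl, ht, hy⟩
      · exact Or.inr (Or.inl hall)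
      · by_cases hin : V L <:+: t
        · right; right
          simp only [Set.mem_iUnion]
          refine ⟨y, by simpa using hy, t, ht, _, ⟨τ', ⟨hmem t y τ' ht hα, fun hG => hn ?_⟩, rfl⟩, rfl⟩
          obtain ⟨u, v, rfl⟩ := hin
          have hu : dq S u = S := dq_loops (fun a ha => ht a (by simp [ha]))
          refine ⟨u, v ++ y :: τ', by rw [hu]; exact hdomS, by rw [hu]; simp [hL], Or.inr ?_⟩
          rw [hu]
          exact ⟨v, y, τ', rfl, fun a ha => ht a (by simp [ha]), hy, hG⟩
        · left; right
          simp only [Set.mem_iUnion]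
          exact ⟨y, by simpa using hy, t, ⟨ht, hin⟩, _, ⟨τ', hbad t y τ' ht hα hn, rfl⟩, rfl⟩
end WordOrd


set_option linter.all false
namespace WordOrd
open scoped ENNReal
open Filter Asymptotics
variable {Λ : Type} (W : WordOrd Λ) [Fintype Λ]

lemma lev_finite (A : Set (List Λ)) (n : ℕ) : (W.lev A n).Finite := by
  refine (List.finite_length_le Λ n).subset ?_
  rintro w ⟨_, hw⟩
  have := W.length_le_size w
  simp only [Set.mem_setOf_eq]; omega

lemma TT_lev {g : ℝ} (hg : 0 < g) (A : Set (List Λ)) (n : ℕ) :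
    W.TT g (W.lev A n) = ENNReal.ofReal ((W.lev A n).ncard * g ^ n) := by
  have h1 : W.TT g (W.lev A n) = ∑' w : W.lev A n, ENNReal.ofReal (g ^ n) := by
    unfold TT
    congr 1
    ext w
    rw [ww, w.2.2]
  rw [h1, ENNReal.tsum_set_const, ENNReal.ofReal_mul (by positivity)]
  rw [← (W.lev_finite A n).cast_ncard_eq]
  simp

lemma choose_le_sum (n k : ℕ) : n.choose (k+1) ≤ ∑ i ∈ Finset.range (n+1), i.choose k := by
  induction n with
  | zero => simp
  | succ n ih =>
    rw [Finset.sum_range_succ, Nat.choose_succ_succ']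
    have : n.choose k ≤ (n+1).choose k := Nat.choose_le_choose k (by omega)
    omega

section lower
variable {g : ℝ} (hg : 0 < g)

lemma TT_lower (hg : 0 < g) {ι : Type} [Fintype ι] (A B : ι → Set (List Λ)) (S : Set (List Λ))
    (hinj : ∀ i j, ∀ a ∈ A i, ∀ b ∈ B i, ∀ a' ∈ A j, ∀ b' ∈ B j, a ++ b = a' ++ b' → i = j ∧ a = a')
    (hsub : ∀ i, ∀ a ∈ A i, ∀ b ∈ B i, a ++ b ∈ S) :
    ∑ i, W.TT g (A i) * W.TT g (B i) ≤ W.TT g S := by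
  let f : (Σ i : ι, A i × B i) → S := fun x => ⟨x.2.1.1 ++ x.2.2.1, hsub x.1 _ x.2.1.2 _ x.2.2.2⟩
  have hf : Function.Injective f := by
    rintro ⟨i, ⟨a, ha⟩, ⟨b, hb⟩⟩ ⟨j, ⟨a', ha'⟩, ⟨b', hb'⟩⟩ h
    have h' : a ++ b = a' ++ b' := congrArg Subtype.val h
    obtain ⟨rfl, rfl⟩ := hinj i j a ha b hb a' ha' b' hb' h'
    have := List.append_cancel_left h'
    subst this
    rfl
  have h1 := ENNReal.tsum_comp_le_tsum_of_injective hf (fun w => W.ww g w.1)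
  refine le_trans (le_of_eq ?_) h1
  rw [ENNReal.tsum_sigma', tsum_fintype]
  refine Finset.sum_congr rfl fun i _ => ?_
  rw [ENNReal.tsum_prod']
  simp only [f]
  simp_rw [W.ww_append hg, ENNReal.tsum_mul_left, ENNReal.tsum_mul_right]
  rfl

lemma TT_pre (hg : 0 < g) (u : List Λ) (B S : Set (List Λ)) (h : ∀ b ∈ B, u ++ b ∈ S) :
    W.ww g u * W.TT g B ≤ W.TT g S := by
  have := W.TT_lower hg (ι := Unit) (fun _ => {u}) (fun _ => B) S
    (by rintro _ _ a rfl b _ a' rfl b' _ _; exact ⟨rfl, rfl⟩) (by rintro _ a rfl b hb; exact h b hb)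
  simpa [TT_singleton] using this

lemma Lst_lower (hg : 0 < g) (hg1 : g ≤ 1) {L : Finset Λ} (hlam : 1 ≤ W.lam g L) {o : Λ} (ho : o ∈ L)
    (ho1 : W.sz o = 1) (n : ℕ) : ENNReal.ofReal (g ^ W.M) ≤ W.TT g (W.lev (Lst L) n) := by
  induction n using Nat.strong_induction_on with
  | _ n ih =>
  by_cases hn : n ≤ W.M
  · have hsz : W.size (List.replicate n o) = n := by simp [size, ho1]
    have h1 : W.TT g {List.replicate n o} ≤ W.TT g (W.lev (Lst L) n) := by
      apply W.TT_mono
      rintro w rfl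
      exact ⟨fun a ha => by rw [List.eq_of_mem_replicate ha]; exact ho, hsz⟩
    refine le_trans ?_ h1
    rw [TT_singleton, ww, hsz]
    exact ENNReal.ofReal_le_ofReal (pow_le_pow_of_le_one hg.le hg1 hn)
  · have h1 := W.TT_lower hg (ι := L) (fun a => {[a.1]}) (fun a => W.lev (Lst L) (n - W.sz a.1))
      (W.lev (Lst L) n) (by
        rintro ⟨i, hi⟩ ⟨j, hj⟩ a rfl b _ a' rfl b' _ h
        simp at h
        obtain ⟨rfl, _⟩ := h
        exact ⟨rfl, rfl⟩) (by
        rintro ⟨i, hi⟩ a rfl b ⟨hb, hb'⟩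
        have := W.sz_le_M i
        refine ⟨?_, ?_⟩
        · intro c hc
          simp at hc
          rcases hc with rfl | hc
          · exact hi
          · exact hb c hc
        · simp at hb' ⊢; omega)
    refine le_trans ?_ h1
    calc ENNReal.ofReal (g ^ W.M) ≤ ENNReal.ofReal (W.lam g L) * ENNReal.ofReal (g ^ W.M) := by
          conv_lhs => rw [← one_mul (ENNReal.ofReal (g ^ W.M))]
          gcongr
          rwa [ENNReal.one_le_ofReal]
      _ = ∑ a : L, W.ww g [a.1] * ENNReal.ofReal (g ^ W.M) := by
          rw [← W.sum_ww hg, Finset.sum_mul, Finset.sum_coe_sort L (fun a => W.ww g [a] * ENNReal.ofReal (g ^ W.M))]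
      _ ≤ _ := by
          refine Finset.sum_le_sum fun a _ => ?_
          rw [TT_singleton]
          gcongr
          apply ih
          have := W.sz_pos a.1; omega

lemma ww_pos (hg : 0 < g) (w : List Λ) : 0 < W.ww g w := by
  rw [ww, ENNReal.ofReal_pos]; positivity

lemma loops_nonempty {g : ℝ} {L : Finset Λ} (h : 1 ≤ W.lam g L) : L.Nonempty := by
  rw [Finset.nonempty_iff_ne_empty]
  rintro rfl
  simp [lam] at h
  linarith

lemma loops_lev {S : Set (List Λ)} (hS : [] ∈ S) {n : ℕ} {b : List Λ}
    (hb : b ∈ Lst (loops S)) : b ∈ S := by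
  have := dq_loops hb
  rw [← this] at hS
  simpa [mem_dq] using hS

lemma chain_lower (hg : 0 < g) (hg1 : g ≤ 1) (hO : W.OneUnit) (k : ℕ) : ∀ S : Set (List Λ), W.Lower S →
    W.HasChain g (k+1) S → ∃ (n0 : ℕ) (c : ℝ≥0∞), c ≠ 0 ∧
      ∀ n : ℕ, c * (n.choose k : ℕ) ≤ W.TT g (W.lev S (n + n0)) := by
  induction k with
  | zero =>
    rintro S hS ⟨u, hdom, -⟩
    have hl : 1 ≤ W.lam g (loops (dq S u)) := hdom.2.ge
    obtain ⟨o, ho, ho1, -⟩ := W.unit_mem hO (hS.dq u) (W.loops_nonempty hl)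
    refine ⟨W.size u, W.ww g u * ENNReal.ofReal (g ^ W.M), ?_, fun n => ?_⟩
    · refine mul_ne_zero (W.ww_pos hg u).ne' ?_
      have : 0 < g ^ W.M := by positivity
      simpa using this
    · simp only [Nat.choose_zero_right, Nat.cast_one, mul_one]
      refine le_trans (mul_le_mul_right (W.Lst_lower hg hg1 hl ho ho1 n) _) (W.TT_pre hg u _ _ ?_)
      rintro b ⟨hb, hb'⟩
      exact ⟨loops_lev (n := n) hdom.1 hb, by simp [hb']; omega⟩
  | succ k ih =>
    rintro S hS ⟨u, hdom, hrest⟩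
    rcases hrest with h | ⟨y, hy, hch⟩
    · omega
    obtain ⟨n1, c1, hc1, h1⟩ := ih _ ((hS.dq u).dq [y]) hch
    have hl : 1 ≤ W.lam g (loops (dq S u)) := hdom.2.ge
    obtain ⟨o, ho, ho1, -⟩ := W.unit_mem hO (hS.dq u) (W.loops_nonempty hl)
    set L := loops (dq S u) with hL
    set T := dq (dq S u) [y] with hT
    have hc2 : ENNReal.ofReal (g ^ W.M) ≠ 0 := by
      have : 0 < g ^ W.M := by positivity
      simpa using this
    refine ⟨n1 + W.sz y + W.size u, W.ww g u * (ENNReal.ofReal (g ^ W.M) * (W.ww g [y] * c1)), ?_, fun n => ?_⟩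
    · exact mul_ne_zero (W.ww_pos hg u).ne' (mul_ne_zero hc2 (mul_ne_zero (W.ww_pos hg _).ne' hc1))
    refine le_trans ?_ (W.TT_pre hg u (W.lev (dq S u) (n + (n1 + W.sz y))) _ ?_)
    swap
    · rintro b ⟨hb, hb'⟩
      exact ⟨hb, by simp [hb']; omega⟩
    rw [mul_assoc]
    gcongr
    refine le_trans ?_ (W.TT_lower hg (ι := Fin (n+1)) (fun i => W.lev (Lst L) (n - i))
      (fun i => List.cons y '' W.lev T (i + n1)) _ ?_ ?_)
    · calc _ ≤ ∑ i : Fin (n+1), ENNReal.ofReal (g ^ W.M) * (W.ww g [y] * (c1 * ((i:ℕ).choose k : ℕ))) := by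
            rw [Fin.sum_univ_eq_sum_range (fun i => ENNReal.ofReal (g ^ W.M) * (W.ww g [y] * (c1 * (i.choose k : ℕ)))) (n+1)]
            simp_rw [← mul_assoc]
            rw [← Finset.mul_sum, ← Nat.cast_sum]
            gcongr
            exact choose_le_sum n k
        _ ≤ _ := by
            refine Finset.sum_le_sum fun i _ => ?_
            gcongr
            · exact W.Lst_lower hg hg1 hl ho ho1 _
            · refine le_trans (mul_le_mul_right (h1 i) _) (W.TT_pre hg [y] _ _ ?_)
              intro b hb; exact ⟨b, hb, rfl⟩
    · rintro i j a ⟨ha, ha'⟩ _ ⟨b, hb, rfl⟩ a' ⟨ha1, ha1'⟩ _ ⟨b', hb', rfl⟩ h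
      have hu : ∀ (a a' : List Λ), a ∈ Lst L → a' ∈ Lst L → ∀ b b', a ++ y :: b = a' ++ y :: b' → a = a' := by
        intro a
        induction a with
        | nil =>
          intro a' _ h' b b' h
          cases a' with
          | nil => rfl
          | cons c a' =>
            simp at h
            exact absurd (h' y (by rw [h.1]; simp)) hy
        | cons d a ih =>
          intro a' h0 h' b b' h
          cases a' with
          | nil =>
            simp at h
            exact absurd (h0 y (by rw [← h.1]; simp)) hy
          | cons c a' =>
            simp only [List.cons_append, List.cons.injEq] at h
            rw [h.1, ih a' (fun x hx => h0 x (by simp [hx])) (fun x hx => h' x (by simp [hx])) b b' h.2]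
      have := hu a a' ha ha1 b b' h
      refine ⟨?_, this⟩
      rw [this, ha1'] at ha'
      apply Fin.ext
      have := i.2; have := j.2
      omega
    · rintro i a ⟨ha, ha'⟩ _ ⟨b, ⟨hb, hb'⟩, rfl⟩
      refine ⟨?_, ?_⟩
      · have h2 := dq_loops (S := dq S u) ha
        rw [hT, ← h2, ← dq_append, mem_dq] at hb
        simpa using hb
      · have := i.2
        simp [ha', hb']; omega
end lower
end WordOrd


set_option linter.all false
namespace WordOrd
open scoped ENNReal Topology
open Filter Asymptotics
variable {Λ : Type} (W : WordOrd Λ) [Fintype Λ]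

lemma NC_of_growth (hO : W.OneUnit) {C : Set (List Λ)} (hC : W.Lower C) {γ : ℝ} (hγ : 1 < γ) {d : ℕ}
    {A : ℝ} (hup : ∀ᶠ n : ℕ in atTop, ((W.lev C n).ncard : ℝ) ≤ A * ((n : ℝ) ^ d * γ ^ n)) :
    W.NC γ⁻¹ C := by
  intro u hu
  by_contra hcon
  push Not at hcon
  set L := loops (dq C u) with hL
  have hγ0 : 0 < γ := by linarith
  have hcont : Continuous (fun g : ℝ => W.lam g L) := by unfold lam; fun_prop
  obtain ⟨g, hg1, hg0, hgγ⟩ : ∃ g, 1 < W.lam g L ∧ 0 < g ∧ g < γ⁻¹ := by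
    have h1 : ∀ᶠ g in 𝓝[<] (γ⁻¹), 1 < W.lam g L :=
      (hcont.continuousAt.eventually_const_lt hcon).filter_mono nhdsWithin_le_nhds
    have h2 : ∀ᶠ g in 𝓝[<] (γ⁻¹), 0 < g :=
      (eventually_gt_nhds (by positivity)).filter_mono nhdsWithin_le_nhds
    obtain ⟨g, h⟩ := (h1.and (h2.and self_mem_nhdsWithin)).exists
    exact ⟨g, h.1, h.2.1, h.2.2⟩
  have hgle : g ≤ 1 := by
    have : γ⁻¹ < 1 := inv_lt_one_of_one_lt₀ hγ
    linarith
  obtain ⟨o, ho, ho1, -⟩ := W.unit_mem hO (hC.dq u) (W.loops_nonempty hg1.le)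
  have hlow : ∀ n, g ^ W.size u * g ^ W.M ≤ ((W.lev C (n + W.size u)).ncard : ℝ) * g ^ (n + W.size u) := by
    intro n
    have h1 : W.ww g u * ENNReal.ofReal (g ^ W.M) ≤ W.TT g (W.lev C (n + W.size u)) := by
      refine le_trans (mul_le_mul_right (W.Lst_lower hg0 hgle hg1.le ho ho1 n) _) (W.TT_pre hg0 u _ _ ?_)
      rintro b ⟨hb, hb'⟩
      exact ⟨loops_lev (n := n) hu hb, by simp [hb']; omega⟩
    rw [W.TT_lev hg0, ww, ← ENNReal.ofReal_mul (by positivity)] at h1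
    exact (ENNReal.ofReal_le_ofReal_iff (by positivity)).1 h1
  have hpos : 0 < g ^ W.size u * g ^ W.M := by positivity
  have hr : γ * g < 1 := by
    calc γ * g < γ * γ⁻¹ := by gcongr
      _ = 1 := mul_inv_cancel₀ hγ0.ne'
  have ht : Tendsto (fun n : ℕ => A * ((n : ℝ) ^ d * (γ * g) ^ n)) atTop (𝓝 (A * 0)) :=
    (tendsto_pow_const_mul_const_pow_of_lt_one d (by positivity) hr).const_mul A
  rw [mul_zero] at ht
  have h3 := ht.eventually_lt_const hpos
  obtain ⟨n, h4, h5, h6⟩ := (hup.and (h3.and (eventually_ge_atTop (W.size u)))).exists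
  have h7 := hlow (n - W.size u)
  rw [Nat.sub_add_cancel h6] at h7
  have h8 : ((W.lev C n).ncard : ℝ) * g ^ n ≤ A * ((n : ℝ) ^ d * (γ * g) ^ n) := by
    calc _ ≤ A * ((n : ℝ) ^ d * γ ^ n) * g ^ n := by gcongr
      _ = _ := by rw [mul_pow]; ring
  linarith

lemma noChain_of_growth (hO : W.OneUnit) {C : Set (List Λ)} (hC : W.Lower C) {γ : ℝ} (hγ : 1 < γ) {D : ℕ}
    (hD : 0 < D)
    {A : ℝ} (hA : 0 < A) (hup : ∀ᶠ n : ℕ in atTop, ((W.lev C n).ncard : ℝ) ≤ A * ((n : ℝ) ^ (D-1) * γ ^ n)) :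
    ¬ W.HasChain γ⁻¹ (D+1) C := by
  intro hch
  have hγ0 : 0 < γ := by linarith
  have hg0 : 0 < γ⁻¹ := by positivity
  have hgle : γ⁻¹ ≤ 1 := (inv_lt_one_of_one_lt₀ hγ).le
  obtain ⟨n0, c, hc, h⟩ := W.chain_lower hg0 hgle hO D C hC hch
  obtain ⟨c', hc', hcc⟩ : ∃ c' : ℝ, 0 < c' ∧ ENNReal.ofReal c' ≤ c := by
    refine ⟨(min c 1).toReal, ?_, ?_⟩
    · apply ENNReal.toReal_pos
      · simp [hc]
      · exact ne_top_of_le_ne_top (by simp) (min_le_right _ _)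
    · rw [ENNReal.ofReal_toReal (ne_top_of_le_ne_top (by simp) (min_le_right c 1))]
      exact min_le_left _ _
  have h' : ∀ n : ℕ, c' * (n.choose D : ℕ) ≤ ((W.lev C (n + n0)).ncard : ℝ) * γ⁻¹ ^ (n + n0) := by
    intro n
    have h1 := (mul_le_mul_left hcc (n.choose D : ℝ≥0∞)).trans (h n)
    rw [W.TT_lev hg0, ← ENNReal.ofReal_natCast, ← ENNReal.ofReal_mul (by positivity)] at h1
    exact (ENNReal.ofReal_le_ofReal_iff (by positivity)).1 h1
  obtain ⟨E, rfl⟩ : ∃ E, D = E + 1 := ⟨D - 1, by omega⟩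
  simp only [Nat.add_sub_cancel] at hup
  rw [eventually_atTop] at hup
  obtain ⟨n1, hup⟩ := hup
  set R : ℝ := A * ((E:ℝ) + 1 + n0 + 1) ^ E * (E+1).factorial / c' with hR
  obtain ⟨m, hm⟩ := exists_nat_gt (max R n1)
  have hm1 : R < m := lt_of_le_of_lt (le_max_left _ _) hm
  have hm2 : n1 < m := by exact_mod_cast lt_of_le_of_lt (le_max_right R _) hm
  have e1 := h' (m + (E+1))
  have e2 := hup (m + (E+1) + n0) (by omega)
  have e3 : ((m + (E+1) + 1 - (E+1) : ℕ) ^ (E+1) : ℝ) ≤ (E+1).factorial * ((m + (E+1)).choose (E+1) : ℕ) := by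
    have := Nat.pow_le_choose (α := ℝ) (E+1) (m + (E+1))
    rw [div_le_iff₀ (by positivity)] at this
    push_cast at this ⊢
    linarith
  have e4 : m + (E+1) + 1 - (E+1) = m + 1 := by omega
  rw [e4] at e3
  have e5 : ((W.lev C (m + (E+1) + n0)).ncard : ℝ) * γ⁻¹ ^ (m + (E+1) + n0) ≤ A * ((m + (E+1) + n0 : ℕ) : ℝ) ^ E := by
    calc _ ≤ A * (((m + (E+1) + n0 : ℕ) : ℝ) ^ E * γ ^ (m + (E+1) + n0)) * γ⁻¹ ^ (m + (E+1) + n0) := by gcongr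
      _ = A * ((m + (E+1) + n0 : ℕ) : ℝ) ^ E * (γ * γ⁻¹) ^ (m + (E+1) + n0) := by rw [mul_pow]; ring
      _ = _ := by rw [mul_inv_cancel₀ hγ0.ne']; simp
  have e6 : ((m + (E+1) + n0 : ℕ) : ℝ) ≤ ((E:ℝ) + 1 + n0 + 1) * ((m:ℝ) + 1) := by
    push_cast; nlinarith [Nat.cast_nonneg (α := ℝ) E, Nat.cast_nonneg (α := ℝ) n0, Nat.cast_nonneg (α := ℝ) m, mul_nonneg (Nat.cast_nonneg (α := ℝ) E) (Nat.cast_nonneg (α := ℝ) m), mul_nonneg (Nat.cast_nonneg (α := ℝ) n0) (Nat.cast_nonneg (α := ℝ) m)]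
  have e7 : ((m + (E+1) + n0 : ℕ) : ℝ) ^ E ≤ ((E:ℝ) + 1 + n0 + 1) ^ E * ((m:ℝ) + 1) ^ E := by
    rw [← mul_pow]; gcongr
  have e8 : c' * ((m:ℝ)+1) ^ (E+1) ≤ (E+1).factorial * (A * (((E:ℝ) + 1 + n0 + 1) ^ E * ((m:ℝ) + 1) ^ E)) := by
    push_cast at e3
    calc c' * ((m:ℝ)+1) ^ (E+1) ≤ c' * ((E+1).factorial * ((m + (E+1)).choose (E+1) : ℕ)) := by gcongr
      _ = (E+1).factorial * (c' * ((m + (E+1)).choose (E+1) : ℕ)) := by ring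
      _ ≤ (E+1).factorial * (A * ((m + (E+1) + n0 : ℕ) : ℝ) ^ E) := mul_le_mul_of_nonneg_left (e1.trans e5) (by positivity)
      _ ≤ _ := by gcongr
  have e9 : c' * ((m:ℝ)+1) ≤ A * ((E:ℝ) + 1 + n0 + 1) ^ E * (E+1).factorial := by
    have hp : 0 < ((m:ℝ)+1)^E := by positivity
    refine le_of_mul_le_mul_right ?_ hp
    rw [pow_succ] at e8
    linarith
  rw [hR, div_lt_iff₀ hc'] at hm1
  linarith

lemma bad_small {g : ℝ} (hg : 0 < g) (hg1 : g < 1) {k : ℕ} {B : Set (List Λ)} (hB : W.Bd g k B) {ε : ℝ} (hε : 0 < ε) :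
    ∀ᶠ n : ℕ in atTop, ((W.lev B n).ncard : ℝ) * g ^ n ≤ ε * (n : ℝ) ^ k := by
  cases k with
  | zero =>
    have h1 : ∑' n, W.TT g (W.lev B n) ≠ ⊤ := by
      refine ne_top_of_le_ne_top hB ?_
      refine ENNReal.tsum_le_of_sum_range_le fun n => ?_
      refine le_trans ?_ (W.TT_lev_sum B n)
      exact Finset.sum_le_sum_of_subset (by simp)
    have h2 := ENNReal.tendsto_atTop_zero_of_tsum_ne_top h1
    have h3 := h2.eventually_lt_const (ENNReal.ofReal_pos.2 hε)
    filter_upwards [h3] with n hn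
    rw [W.TT_lev hg] at hn
    have := (ENNReal.ofReal_lt_ofReal_iff hε).1 hn
    simpa using this.le
  | succ j =>
    obtain ⟨K, hK, h⟩ := hB
    have h1 : ∀ n : ℕ, ((W.lev B n).ncard : ℝ) * g ^ n ≤ K.toReal * ((n:ℝ)+1)^j := by
      intro n
      have := h n
      rw [W.TT_lev hg] at this
      have := ENNReal.toReal_mono (ENNReal.mul_ne_top hK (by simp)) this
      rw [ENNReal.toReal_ofReal (by positivity)] at this
      rw [ENNReal.toReal_mul, ENNReal.toReal_pow, ENNReal.toReal_add (by simp) (by simp)] at this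
      simpa using this
    obtain ⟨m, hm⟩ := exists_nat_gt (K.toReal * 2 ^ j / ε)
    filter_upwards [eventually_ge_atTop (max m 1)] with n hn
    have hn1 : (1:ℝ) ≤ n := by exact_mod_cast (le_max_right m 1).trans hn
    have hn2 : (m:ℝ) ≤ n := by exact_mod_cast (le_max_left m 1).trans hn
    refine (h1 n).trans ?_
    calc K.toReal * ((n:ℝ)+1)^j ≤ K.toReal * (2 * n)^j := by
          gcongr; linarith
      _ = (K.toReal * 2 ^ j) * (n:ℝ)^j := by rw [mul_pow]; ring
      _ ≤ (ε * n) * (n:ℝ)^j := by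
          rw [div_lt_iff₀ hε] at hm
          exact mul_le_mul_of_nonneg_right (by nlinarith) (by positivity)
      _ = _ := by rw [pow_succ]; ring

theorem word_main (hO : W.OneUnit) {C : Set (List Λ)} (hC : W.Lower C) {γ : ℝ} (hγ : 1 < γ) {D : ℕ} (hD : 0 < D)
    (hΘ : (fun n : ℕ => ((W.lev C n).ncard : ℝ)) =Θ[atTop] fun n => (n : ℝ) ^ (D - 1) * γ ^ n)
    (K : ℕ) {ε : ℝ} (hε : 0 < ε) :
    ∀ᶠ n : ℕ in atTop, ∃ B ⊆ W.lev C n, (B.ncard : ℝ) ≤ ε * (W.lev C n).ncard ∧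
      ∀ α ∈ W.lev C n, α ∉ B → ∃ f : ℕ → List Λ, Set.InjOn f {j | j ≤ K} ∧
        ∀ j ≤ K, f j ∈ W.lev C n ∧ ∀ m, (W.cont C (f j) m).ncard = (W.cont C α m).ncard := by
  have hγ0 : 0 < γ := by linarith
  have hg0 : 0 < γ⁻¹ := by positivity
  have hgle : γ⁻¹ < 1 := (inv_lt_one_of_one_lt₀ hγ)
  obtain ⟨A, hA, hup⟩ := hΘ.1.exists_pos
  obtain ⟨A', hA', hlo⟩ := hΘ.2.exists_pos
  rw [isBigOWith_iff] at hup hlo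
  have hup' : ∀ᶠ n : ℕ in atTop, ((W.lev C n).ncard : ℝ) ≤ A * ((n : ℝ) ^ (D-1) * γ ^ n) := by
    filter_upwards [hup] with n hn
    rwa [Real.norm_of_nonneg (by positivity), Real.norm_of_nonneg (by positivity)] at hn
  have hlo' : ∀ᶠ n : ℕ in atTop, (n : ℝ) ^ (D-1) * γ ^ n ≤ A' * ((W.lev C n).ncard : ℝ) := by
    filter_upwards [hlo] with n hn
    rwa [Real.norm_of_nonneg (by positivity), Real.norm_of_nonneg (by positivity)] at hn
  have hNC := W.NC_of_growth hO hC hγ hup'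
  have hch := W.noChain_of_growth hO hC hγ hD hA hup'
  obtain ⟨N, hN⟩ := W.embed_loop C hC
  have hN' : W.EmbN C (N+1) ∨ W.EmbN C N := Or.inr hN
  -- the block is nonempty once `N + M > 0`
  have hVne : ∀ L, W.lam γ⁻¹ L = 1 → W.Vb K N L ≠ [] := by
    intro L hL h
    have h1 := W.toList_ne_nil hL
    rw [Vb, List.append_eq_nil_iff] at h
    have h2 := le_length_rep h1 (N + W.M)
    rw [blk] at h
    rw [h.1] at h2
    obtain ⟨a, ha⟩ : L.Nonempty := W.loops_nonempty hL.ge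
    have := W.sz_pos a
    have := W.sz_le_M a
    simp at h2
    omega
  have hbd := W.bad_bound hg0 hgle (V := W.Vb K N) (fun L => W.mem_Vb) hVne C hC hNC (D-1)
  rw [Nat.sub_add_cancel hD] at hbd
  have hsm := W.bad_small hg0 hgle hbd (ε := ε / A') (by positivity)
  filter_upwards [hsm, hlo'] with n h1 h2
  refine ⟨W.lev {α | α ∈ C ∧ ¬ W.Good γ⁻¹ (W.Vb K N) D C α} n, fun w hw => ⟨hw.1.1, hw.2⟩, ?_, ?_⟩
  · set b : ℝ := ((W.lev {α | α ∈ C ∧ ¬ W.Good γ⁻¹ (W.Vb K N) D C α} n).ncard : ℝ)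
    have h3 : b = b * γ⁻¹ ^ n * γ ^ n := by
      rw [mul_assoc, ← mul_pow, inv_mul_cancel₀ hγ0.ne']; simp
    rw [h3]
    calc b * γ⁻¹ ^ n * γ ^ n ≤ ε / A' * (n:ℝ) ^ (D-1) * γ ^ n := by gcongr
      _ = ε / A' * ((n:ℝ) ^ (D-1) * γ ^ n) := by ring
      _ ≤ ε / A' * (A' * ((W.lev C n).ncard : ℝ)) := by gcongr
      _ = _ := by field_simp
  · rintro α ⟨hα, hαn⟩ hαB
    have hG : W.Good γ⁻¹ (W.Vb K N) D C α := by
      by_contra hG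
      exact hαB ⟨⟨hα, hG⟩, hαn⟩
    obtain ⟨f, hf, hf'⟩ := W.good_many hO hg0 hgle hC hNC hN hD hch K hα hG
    exact ⟨f, hf, fun j hj => ⟨⟨(hf' j hj).1, (hf' j hj).2.1.trans hαn⟩, (hf' j hj).2.2⟩⟩
end WordOrd


set_option linter.all false

namespace PermLayer

/-- value of a permutation on naturals -/
def pv (π : PPerm) (i : ℕ) : ℕ := if h : i < π.1 then (π.2 ⟨i, h⟩ : ℕ) else i

lemma pv_lt {π : PPerm} {i : ℕ} (h : i < π.1) : pv π i < π.1 := by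
  rw [pv, dif_pos h]; exact (π.2 ⟨i, h⟩).2

lemma pv_fin (π : PPerm) (i : Fin π.1) : pv π i = (π.2 i : ℕ) := by
  rw [pv, dif_pos i.2]

lemma pv_inj {π : PPerm} {i j : ℕ} (hi : i < π.1) (hj : j < π.1) (h : pv π i = pv π j) : i = j := by
  rw [pv, pv, dif_pos hi, dif_pos hj] at h
  have := π.2.injective (Fin.ext h)
  simpa using this

lemma pext {π τ : PPerm} (h : π.1 = τ.1) (h' : ∀ i < π.1, pv π i = pv τ i) : π = τ := by
  obtain ⟨n, a⟩ := π
  obtain ⟨m, b⟩ := τ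
  simp only at h
  subst h
  congr 1
  ext i
  have := h' i i.2
  rw [pv_fin ⟨n, a⟩ i, pv_fin ⟨n, b⟩ i] at this
  exact this

lemma ple_iff (π τ : PPerm) : PatternLE π τ ↔ ∃ g : ℕ → ℕ, (∀ i < π.1, g i < τ.1) ∧
    (∀ i j, i < j → j < π.1 → g i < g j) ∧
    ∀ i j, i < π.1 → j < π.1 → (pv π i < pv π j ↔ pv τ (g i) < pv τ (g j)) := by
  constructor
  · rintro ⟨g, hg, h⟩
    refine ⟨fun i => if h : i < π.1 then (g ⟨i, h⟩ : ℕ) else 0, ?_, ?_, ?_⟩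
    · intro i hi; simp [hi]
    · intro i j hij hj
      have hi : i < π.1 := hij.trans hj
      simp only [hi, hj, dif_pos]
      exact hg (by simpa using hij)
    · intro i j hi hj
      simp only [hi, hj, dif_pos]
      have := h ⟨i, hi⟩ ⟨j, hj⟩
      rw [pv_fin, pv_fin]
      rw [show pv π i = pv π ((⟨i, hi⟩ : Fin π.1) : ℕ) from rfl,
        show pv π j = pv π ((⟨j, hj⟩ : Fin π.1) : ℕ) from rfl, pv_fin, pv_fin]
      simpa using this
  · rintro ⟨g, h1, h2, h3⟩
    refine ⟨fun i => ⟨g i, h1 i i.2⟩, fun i j hij => h2 i j hij j.2, fun i j => ?_⟩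
    have := h3 i j i.2 j.2
    rw [pv_fin, pv_fin, show pv τ (g i) = pv τ ((⟨g i, h1 i i.2⟩ : Fin τ.1) : ℕ) from rfl,
        show pv τ (g j) = pv τ ((⟨g j, h1 j j.2⟩ : Fin τ.1) : ℕ) from rfl, pv_fin, pv_fin] at this
    simpa using this

lemma ple_refl (π : PPerm) : PatternLE π π := ⟨id, strictMono_id, fun _ _ => Iff.rfl⟩
lemma ple_trans {a b c : PPerm} (h1 : PatternLE a b) (h2 : PatternLE b c) : PatternLE a c := by
  obtain ⟨g, hg, h⟩ := h1
  obtain ⟨g', hg', h'⟩ := h2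
  exact ⟨g' ∘ g, hg'.comp hg, fun i j => (h i j).trans (h' _ _)⟩
lemma ple_size {a b : PPerm} (h : PatternLE a b) : a.1 ≤ b.1 := by
  obtain ⟨g, hg, h⟩ := h
  simpa using Fintype.card_le_of_injective g hg.injective

lemma ple_eq {a b : PPerm} (h : PatternLE a b) (hs : a.1 = b.1) : a = b := by
  obtain ⟨n, a⟩ := a
  obtain ⟨m, b⟩ := b
  simp only at hs
  subst hs
  obtain ⟨g, hg, h⟩ := h
  simp only at g hg h
  have hid : ∀ f : Fin n → Fin n, StrictMono f → f = id := by
    intro f hf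
    have := Subsingleton.elim (StrictMono.orderIsoOfSurjective f hf (Finite.injective_iff_surjective.1 hf.injective)) (OrderIso.refl _)
    funext x
    exact DFunLike.congr_fun this x
  have h1 := hid g hg
  subst h1
  have h2 := hid (b ∘ a.symm) (by
    intro x y hxy
    have := (h (a.symm x) (a.symm y)).1 (by simpa using hxy)
    simpa using this)
  congr 1
  ext i
  have := congrFun h2 (a i)
  simp at this
  rw [this]

lemma psum_size (a b : PPerm) : (psum a b).1 = a.1 + b.1 := rfl

lemma pv_psum (a b : PPerm) (i : ℕ) :
    pv (psum a b) i = if i < a.1 then pv a i else a.1 + pv b (i - a.1) := by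
  by_cases hi : i < (psum a b).1
  swap
  · have hi' : ¬ i < a.1 + b.1 := hi
    rw [pv, dif_neg hi, if_neg (by omega), pv, dif_neg (by omega)]
    omega
  · rw [pv, dif_pos hi]
    have hi' : i < a.1 + b.1 := hi
    split_ifs with h
    · have : (⟨i, hi⟩ : Fin (a.1 + b.1)) = Fin.castAdd b.1 ⟨i, h⟩ := rfl
      show ((finSumFinEquiv.symm.trans ((Equiv.sumCongr a.2 b.2).trans finSumFinEquiv)) (⟨i, hi⟩ : Fin (a.1 + b.1)) : ℕ) = _
      rw [this, pv, dif_pos h]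
      simp only [Equiv.trans_apply, finSumFinEquiv_symm_apply_castAdd, Equiv.sumCongr_apply, Sum.map_inl, finSumFinEquiv_apply_left, Fin.val_castAdd]
    · have h2 : i - a.1 < b.1 := by omega
      have : (⟨i, hi⟩ : Fin (a.1 + b.1)) = Fin.natAdd a.1 ⟨i - a.1, h2⟩ := by
        ext; simp; omega
      show ((finSumFinEquiv.symm.trans ((Equiv.sumCongr a.2 b.2).trans finSumFinEquiv)) (⟨i, hi⟩ : Fin (a.1 + b.1)) : ℕ) = _
      rw [this, pv, dif_pos h2]
      simp only [Equiv.trans_apply, finSumFinEquiv_symm_apply_natAdd, Equiv.sumCongr_apply, Sum.map_inr, finSumFinEquiv_apply_right, Fin.val_natAdd]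

/-- empty permutation -/
def pnil : PPerm := ⟨0, 1⟩
lemma psum_nil (a : PPerm) : psum a pnil = a := by
  refine pext (π := psum a pnil) (τ := a) rfl ?_
  intro i hi
  have : i < a.1 := hi
  rw [pv_psum, if_pos this]
lemma nil_psum (a : PPerm) : psum pnil a = a := by
  apply pext (by simp [psum_size, pnil])
  intro i hi
  rw [pv_psum, if_neg (by simp [pnil])]
  simp [pnil]
lemma psum_assoc (a b c : PPerm) : psum (psum a b) c = psum a (psum b c) := by
  apply pext (by simp [psum_size, add_assoc])
  intro i hi
  simp only [pv_psum, psum_size]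
  split_ifs <;> first | omega | rfl | skip
  rw [Nat.sub_add_eq]; omega

lemma eq_nil {a : PPerm} (h : a.1 = 0) : a = pnil := by
  apply pext h
  intro i hi; omega

lemma psum_inj {a b c d : PPerm} (h : psum a b = psum c d) (hs : a.1 = c.1) : a = c ∧ b = d := by
  have h1 : a.1 + b.1 = c.1 + d.1 := congrArg Sigma.fst h
  have h2 : ∀ i, pv (psum a b) i = pv (psum c d) i := fun i => by rw [h]
  simp only [pv_psum] at h2
  constructor
  · apply pext hs
    intro i hi
    have := h2 i
    rwa [if_pos hi, if_pos (by omega)] at this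
  · apply pext (by omega)
    intro i hi
    have := h2 (i + a.1)
    rw [if_neg (by omega), if_neg (by omega), hs] at this
    simpa using this

lemma mkperm (n : ℕ) (f : ℕ → ℕ) (h : ∀ i < n, f i < n)
    (hinj : ∀ i j, i < n → j < n → f i = f j → i = j) :
    ∃ π : PPerm, π.1 = n ∧ ∀ i < n, pv π i = f i := by
  let F : Fin n → Fin n := fun i => ⟨f i, h i i.2⟩
  have hF : Function.Injective F := by
    intro i j hij
    apply Fin.ext
    exact hinj i j i.2 j.2 (by simpa [F] using hij)
  refine ⟨⟨n, Equiv.ofBijective F (Finite.injective_iff_bijective.1 hF)⟩, rfl, fun i hi => ?_⟩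
  simp [pv, hi, F]

/-- cutting a permutation -/
lemma pcut {π : PPerm} {k : ℕ} (hk : k ≤ π.1) (h : ∀ i < k, pv π i < k) :
    ∃ a b : PPerm, a.1 = k ∧ π = psum a b := by
  have hge : ∀ i, k ≤ i → i < π.1 → k ≤ pv π i := by
    intro i hi hi'
    by_contra hcon
    push Not at hcon
    have himg : (Finset.range k).image (pv π) = Finset.range k := by
      apply Finset.eq_of_subset_of_card_le
      · intro x hx
        simp only [Finset.mem_image, Finset.mem_range] at hx ⊢
        obtain ⟨j, hj, rfl⟩ := hx
        exact h j hj
      · rw [Finset.card_image_of_injOn]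
        intro x hx y hy hxy
        simp at hx hy
        exact pv_inj (by omega) (by omega) hxy
    have : pv π i ∈ (Finset.range k).image (pv π) := by rw [himg]; simpa using hcon
    simp only [Finset.mem_image, Finset.mem_range] at this
    obtain ⟨j, hj, hj'⟩ := this
    have := pv_inj (by omega) hi' hj'
    omega
  obtain ⟨a, ha, ha'⟩ := mkperm k (pv π) h (fun i j hi hj => pv_inj (by omega) (by omega))
  obtain ⟨b, hb, hb'⟩ := mkperm (π.1 - k) (fun i => pv π (k + i) - k) (by
    intro i hi
    have := pv_lt (π := π) (i := k + i) (by omega)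
    have := hge (k+i) (by omega) (by omega)
    omega) (by
    intro i j hi hj hij
    have h1 := hge (k+i) (by omega) (by omega)
    have h2 := hge (k+j) (by omega) (by omega)
    have hij' : pv π (k + i) - k = pv π (k + j) - k := hij
    have := pv_inj (π := π) (i := k+i) (j := k+j) (by omega) (by omega) (by omega)
    omega)
  refine ⟨a, b, ha, pext (by rw [psum_size]; omega) ?_⟩
  intro i hi
  rw [pv_psum]
  split_ifs with hik
  · rw [ha' i (by omega)]
  · rw [hb' _ (by omega)]
    have := hge i (by omega) hi
    have e : k + (i - a.1) = i := by omega
    rw [e]; omega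

lemma psum_mono {a b c d : PPerm} (h1 : PatternLE a c) (h2 : PatternLE b d) :
    PatternLE (psum a b) (psum c d) := by
  rw [ple_iff] at h1 h2 ⊢
  obtain ⟨f, f1, f2, f3⟩ := h1
  obtain ⟨g, g1, g2, g3⟩ := h2
  refine ⟨fun i => if i < a.1 then f i else c.1 + g (i - a.1), ?_, ?_, ?_⟩
  · intro i hi
    rw [psum_size] at hi ⊢
    simp only
    split_ifs with h
    · have := f1 i h; omega
    · have := g1 (i - a.1) (by omega); omega
  · intro i j hij hj
    rw [psum_size] at hj
    simp only
    split_ifs with h h' h'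
    · exact f2 i j hij h'
    · have := f1 i h; omega
    · omega
    · have := g2 (i - a.1) (j - a.1) (by omega) (by omega); omega
  · intro i j hi hj
    rw [psum_size] at hi hj
    simp only [pv_psum]
    by_cases h : i < a.1 <;> by_cases h' : j < a.1
    · have := f1 i h; have := f1 j h'
      simp only [h, h', if_true, f1 i h, f1 j h']
      exact f3 i j h h'
    · simp only [h, h', if_true, if_false, f1 i h]
      have := pv_lt h
      have := pv_lt (f1 i h)
      simp; omega
    · simp only [h, h', if_true, if_false, f1 j h']
      have := pv_lt h'
      have := pv_lt (f1 j h')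
      simp; omega
    · simp only [h, h', if_false]
      have := g3 (i - a.1) (j - a.1) (by omega) (by omega)
      simpa using this

lemma ple_psum_left (a b : PPerm) : PatternLE a (psum a b) := by
  rw [ple_iff]
  refine ⟨id, ?_, ?_, ?_⟩
  · intro i hi; rw [psum_size]; simp; omega
  · intro i j h _; exact h
  · intro i j hi hj
    simp [pv_psum, hi, hj]

lemma ple_psum_right (a b : PPerm) : PatternLE b (psum a b) := by
  rw [ple_iff]
  refine ⟨fun i => a.1 + i, ?_, ?_, ?_⟩
  · intro i hi; rw [psum_size]; simp; omega
  · intro i j h _; simp; omega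
  · intro i j hi hj
    simp [pv_psum]

lemma ple_split {a c d : PPerm} (h : PatternLE a (psum c d)) :
    ∃ a1 a2, a = psum a1 a2 ∧ PatternLE a1 c ∧ PatternLE a2 d := by
  classical
  rw [ple_iff] at h
  obtain ⟨g, g1, g2, g3⟩ := h
  rw [psum_size] at g1
  obtain ⟨k, hk, hk1, hk2⟩ : ∃ k ≤ a.1, (∀ i < k, g i < c.1) ∧ ∀ i, k ≤ i → i < a.1 → c.1 ≤ g i := by
    by_cases hex : ∃ i, i < a.1 ∧ c.1 ≤ g i
    · refine ⟨Nat.find hex, (Nat.find_spec hex).1.le, ?_, ?_⟩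
      · intro i hi
        have := Nat.find_min hex hi
        have h2 := (Nat.find_spec hex).1
        push Not at this
        exact this (by omega)
      · intro i hi hi'
        have h2 := (Nat.find_spec hex).2
        rcases Nat.eq_or_lt_of_le hi with h3 | h3
        · rwa [h3] at h2
        · have := g2 _ _ h3 hi'; omega
    · push Not at hex
      exact ⟨a.1, le_rfl, hex, fun i h1 h2 => by omega⟩
  have hlt : ∀ i j, i < k → k ≤ j → j < a.1 → pv a i < pv a j := by
    intro i j hi hj hj'
    rw [g3 i j (by omega) hj', pv_psum, pv_psum, if_pos (hk1 i hi), if_neg (by have := hk2 j hj hj'; omega)]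
    have := pv_lt (hk1 i hi); omega
  have hcut : ∀ i < k, pv a i < k := by
    intro i hi
    by_contra hcon
    push Not at hcon
    have hc : (Finset.Ico k a.1).card ≤ (Finset.Ico (pv a i + 1) a.1).card := by
      apply Finset.card_le_card_of_injOn (pv a)
      · intro j hj
        simp only [Finset.coe_Ico, Set.mem_Ico] at hj ⊢
        have := hlt i j hi hj.1 hj.2
        exact ⟨by omega, pv_lt hj.2⟩
      · intro x hx y hy hxy
        simp only [Finset.coe_Ico, Set.mem_Ico] at hx hy
        exact pv_inj hx.2 hy.2 hxy
    simp at hc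
    have := pv_lt (π := a) (i := i) (by omega)
    omega
  obtain ⟨a1, a2, ha1, rfl⟩ := pcut hk hcut
  have hs := psum_size a1 a2
  refine ⟨a1, a2, rfl, (ple_iff _ _).2 ⟨g, ?_, ?_, ?_⟩, (ple_iff _ _).2 ⟨fun i => g (a1.1 + i) - c.1, ?_, ?_, ?_⟩⟩
  · intro i hi; exact hk1 i (by omega)
  · intro i j hij hj; exact g2 i j hij (by omega)
  · intro i j hi hj
    have := g3 i j (by omega) (by omega)
    rwa [pv_psum, pv_psum, pv_psum, pv_psum, if_pos hi, if_pos hj, if_pos (hk1 i (by omega)), if_pos (hk1 j (by omega))] at this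
  · intro i hi
    have := g1 (a1.1 + i) (by omega)
    have := hk2 (a1.1 + i) (by omega) (by omega)
    simp only; omega
  · intro i j hij hj
    have := hk2 (a1.1 + i) (by omega) (by omega)
    have := g2 (a1.1 + i) (a1.1 + j) (by omega) (by omega)
    simp only; omega
  · intro i j hi hj
    have e1 := hk2 (a1.1 + i) (by omega) (by omega)
    have e2 := hk2 (a1.1 + j) (by omega) (by omega)
    have := g3 (a1.1 + i) (a1.1 + j) (by omega) (by omega)
    rw [pv_psum, pv_psum, pv_psum, pv_psum, if_neg (by omega), if_neg (by omega), if_neg (by omega), if_neg (by omega)] at this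
    simpa using this

section words
variable {C : Set PPerm}

/-- letters -/
abbrev Let (C : Set PPerm) : Type := {π : PPerm // π ∈ C ∧ SumIndec π}

/-- permutation of a word -/
def PP (w : List (Let C)) : PPerm := w.foldr (fun a π => psum a.1 π) pnil

@[simp] lemma PP_nil : PP ([] : List (Let C)) = pnil := rfl
@[simp] lemma PP_cons (x : Let C) (w : List (Let C)) : PP (x :: w) = psum x.1 (PP w) := rfl
lemma PP_append (a b : List (Let C)) : PP (a ++ b) = psum (PP a) (PP b) := by
  induction a with
  | nil => simp [nil_psum]
  | cons x a ih => simp [ih, psum_assoc]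
lemma PP_single (x : Let C) : PP [x] = x.1 := by simp [psum_nil]
lemma PP_size (w : List (Let C)) : (PP w).1 = (w.map (fun a => a.1.1)).sum := by
  induction w with
  | nil => rfl
  | cons x w ih => simp [psum_size, ih]
lemma let_pos (x : Let C) : 0 < x.1.1 := x.2.2.1

lemma PP_split {w : List (Let C)} : ∀ {a1 a2 : PPerm}, PP w = psum a1 a2 →
    ∃ w1 w2, w = w1 ++ w2 ∧ PP w1 = a1 ∧ PP w2 = a2 := by
  induction w with
  | nil =>
    intro a1 a2 h
    have h1 : 0 = a1.1 + a2.1 := congrArg Sigma.fst h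
    exact ⟨[], [], rfl, by rw [PP_nil, eq_nil (a := a1) (by omega)], by rw [PP_nil, eq_nil (a := a2) (by omega)]⟩
  | cons x w ih =>
    intro a1 a2 h
    rw [PP_cons] at h
    have h1 : x.1.1 + (PP w).1 = a1.1 + a2.1 := congrArg Sigma.fst h
    rcases Nat.eq_zero_or_pos a1.1 with h0 | h0
    · have := eq_nil h0
      subst this
      exact ⟨[], x :: w, rfl, rfl, by rw [PP_cons, h, nil_psum]⟩
    have h2 : ∀ i, pv (psum x.1 (PP w)) i = pv (psum a1 a2) i := fun i => by rw [h]
    simp only [pv_psum] at h2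
    by_cases hle : x.1.1 ≤ a1.1
    · obtain ⟨b, c, hb, rfl⟩ := pcut (π := a1) hle (by
        intro i hi
        have := h2 i
        rw [if_pos hi, if_pos (by omega)] at this
        rw [← this]; exact pv_lt hi)
      rw [psum_assoc] at h
      obtain ⟨rfl, h3⟩ := psum_inj h hb.symm
      obtain ⟨w1, w2, rfl, h4, h5⟩ := ih h3
      exact ⟨x :: w1, w2, rfl, by rw [PP_cons, h4], h5⟩
    · exfalso
      push Not at hle
      obtain ⟨b, c, hb, hx⟩ := pcut (π := x.1) hle.le (by
        intro i hi
        have := h2 i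
        rw [if_pos (by omega), if_pos hi] at this
        rw [this]; exact pv_lt hi)
      have hs := congrArg Sigma.fst hx
      have hs' : x.1.1 = b.1 + c.1 := hs
      exact x.2.2.2 ⟨b, c, by omega, by omega, hx⟩

lemma PP_inj {w : List (Let C)} : ∀ {w' : List (Let C)}, PP w = PP w' → w = w' := by
  have hnil : ∀ v : List (Let C), (PP v).1 = 0 → v = [] := by
    intro v hv
    cases v with
    | nil => rfl
    | cons x v =>
      have := let_pos x
      rw [PP_cons, psum_size] at hv; omega
  induction w with
  | nil => intro w' h; exact (hnil w' (by rw [← h]; rfl)).symm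
  | cons x w ih =>
    intro w' h
    rw [PP_cons] at h
    obtain ⟨w1, w2, rfl, h1, h2⟩ := PP_split h.symm
    rw [← ih h2.symm]
    cases w1 with
    | nil =>
      have := let_pos x
      rw [← h1] at this
      simp [pnil] at this
    | cons y w1 =>
      rw [PP_cons] at h1
      by_cases h0 : (PP w1).1 = 0
      · have := hnil _ h0
        subst this
        rw [PP_nil, psum_nil] at h1
        rw [Subtype.ext h1]; rfl
      · exact absurd ⟨y.1, PP w1, let_pos y, by omega, h1.symm⟩ x.2.2.2

/-- the permutation of size one -/
def pone : PPerm := ⟨1, 1⟩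
lemma pone_indec : SumIndec pone := by
  refine ⟨by simp [pone], ?_⟩
  rintro ⟨a, b, ha, hb, h⟩
  have : 1 = a.1 + b.1 := congrArg Sigma.fst h
  omega
lemma pone_le {a : PPerm} (h : 0 < a.1) : PatternLE pone a := by
  rw [ple_iff]
  refine ⟨fun _ => 0, fun _ _ => h, ?_, ?_⟩
  · intro i j hij hj; simp [pone] at hj; omega
  · intro i j hi hj
    simp [pone] at hi hj
    subst hi; subst hj; simp

/-- the word order of a class -/
def WO (hclass : IsPermClass C) : WordOrd (Let C) where
  sz a := a.1.1
  le a b := PatternLE (PP a) (PP b)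
  sz_pos := let_pos
  refl a := ple_refl _
  trans a b c := ple_trans
  nil_le b := ⟨fun i => Fin.elim0 i, fun i => Fin.elim0 i, fun i => Fin.elim0 i⟩
  split a x t := by
    constructor
    · intro h
      rw [PP_cons] at h
      obtain ⟨a1, a2, h1, h2, h3⟩ := ple_split h
      obtain ⟨w1, w2, rfl, rfl, rfl⟩ := PP_split h1
      exact ⟨w1, w2, rfl, by rwa [PP_single], h3⟩
    · rintro ⟨a1, a2, rfl, h1, h2⟩
      rw [PP_single] at h1
      rw [PP_append, PP_cons]
      exact psum_mono h1 h2
  size_le a b h := by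
    rw [← PP_size, ← PP_size]; exact ple_size h
  size_eq a b h hs := by
    rw [← PP_size, ← PP_size] at hs
    exact PP_inj (ple_eq h hs)
  unit a := ⟨⟨pone, hclass _ _ (pone_le (let_pos a)) a.2.1, pone_indec⟩, rfl, by
    rw [PP_single, PP_single]; exact pone_le (let_pos a)⟩

lemma WO_size (hclass : IsPermClass C) (w : List (Let C)) : (WO hclass).size w = (PP w).1 := by
  rw [PP_size]; rfl

lemma WO_one (hclass : IsPermClass C) : (WO hclass).OneUnit := by
  intro o o' h h'
  apply Subtype.ext
  apply ple_eq _ (h.trans h'.symm)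
  have h1 : o.1.1 = 1 := h
  have h2 : o.1 = pone := by
    have h1' : pone.1 = o.1.1 := h1.symm
    exact (ple_eq (pone_le (let_pos o)) h1').symm
  rw [h2]; exact pone_le (let_pos o')

lemma PP_surj (hclass : IsPermClass C) : ∀ n, ∀ π : PPerm, π.1 = n → π ∈ C → ∃ w : List (Let C), PP w = π := by
  intro n
  induction n using Nat.strong_induction_on with
  | _ n ih =>
  intro π hn hπ
  rcases Nat.eq_zero_or_pos n with h0 | h0
  · exact ⟨[], (eq_nil (by omega)).symm⟩
  by_cases hind : SumIndec π
  · exact ⟨[⟨π, hπ, hind⟩], PP_single _⟩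
  · unfold SumIndec at hind
    push Not at hind
    obtain ⟨α, β, ha, hb, rfl⟩ := hind (by omega)
    rw [psum_size] at hn
    obtain ⟨w1, h1⟩ := ih α.1 (by omega) α rfl (hclass _ _ (ple_psum_left _ _) hπ)
    obtain ⟨w2, h2⟩ := ih β.1 (by omega) β rfl (hclass _ _ (ple_psum_right _ _) hπ)
    exact ⟨w1 ++ w2, by rw [PP_append, h1, h2]⟩
end words
end PermLayer

open Filter Asymptotics

set_option linter.all false

namespace PermLayer

lemma fin_level (C : Set PPerm) (n : ℕ) : {τ : PPerm | τ ∈ C ∧ τ.1 = n}.Finite := by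
  refine (Set.finite_range (fun σ : Equiv.Perm (Fin n) => (⟨n, σ⟩ : PPerm))).subset ?_
  rintro ⟨m, σ⟩ ⟨_, h⟩
  simp only at h
  subst h
  exact ⟨σ, rfl⟩

lemma avcnt_add (C : Set PPerm) (α : PPerm) (n : ℕ) :
    avcnt C α n + {τ : PPerm | τ ∈ C ∧ τ.1 = n ∧ PatternLE α τ}.ncard = cnt C n := by
  have hf := fin_level C n
  unfold avcnt cnt
  rw [← Set.ncard_union_eq ?_ (hf.subset (fun τ h => ⟨h.1, h.2.1⟩)) (hf.subset (fun τ h => ⟨h.1, h.2.1⟩))]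
  · congr 1
    ext τ
    simp only [Set.mem_union, Set.mem_setOf_eq]
    tauto
  · rw [Set.disjoint_left]
    rintro τ ⟨_, _, h⟩ ⟨_, _, h'⟩
    exact h h'

/-- class of a permutation -/
def cls (C : Set PPerm) (n : ℕ) (α : PPerm) : Set PPerm := {β : PPerm | β ∈ C ∧ β.1 = n ∧ WilfEq C α β}

lemma wilf_bound (C : Set PPerm) (n K : ℕ) (B : Set PPerm) (hB : B ⊆ {τ : PPerm | τ ∈ C ∧ τ.1 = n})
    (h : ∀ α, α ∈ C → α.1 = n → α ∉ B → K + 1 ≤ (cls C n α).ncard) :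
    ∃ M : ℕ, wilfcnt C n ≤ B.ncard + M ∧ (K + 1) * M ≤ cnt C n := by
  classical
  have hf := fin_level C n
  have hBf := hf.subset hB
  set X : Finset PPerm := hf.toFinset with hX
  set s : Finset PPerm := X.filter (fun α => K + 1 ≤ (cls C n α).ncard) with hs
  refine ⟨(s.image (cls C n)).card, ?_, ?_⟩
  · have hsub : {S : Set PPerm | ∃ α : PPerm, α ∈ C ∧ α.1 = n ∧
        S = {β : PPerm | β ∈ C ∧ β.1 = n ∧ WilfEq C α β}} ⊆ (cls C n '' B) ∪ (s.image (cls C n) : Finset (Set PPerm)) := by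
      rintro S ⟨α, h1, h2, rfl⟩
      by_cases hα : α ∈ B
      · exact Or.inl ⟨α, hα, rfl⟩
      · right
        rw [Finset.mem_coe, Finset.mem_image]
        exact ⟨α, by simp [hs, hX, h1, h2]; exact h α h1 h2 hα, rfl⟩
    unfold wilfcnt
    refine (Set.ncard_le_ncard hsub ((hBf.image _).union (Finset.finite_toSet _))).trans ?_
    refine (Set.ncard_union_le _ _).trans ?_
    rw [Set.ncard_coe_finset]
    exact Nat.add_le_add_right (Set.ncard_image_le hBf) _
  · have : (K + 1) * (s.image (cls C n)).card ≤ s.card := by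
      rw [mul_comm, ← smul_eq_mul]
      rw [Finset.card_eq_sum_card_image (cls C n) s]
      apply Finset.card_nsmul_le_sum
      intro S hS
      rw [Finset.mem_image] at hS
      obtain ⟨α, hα, rfl⟩ := hS
      have hα' := (Finset.mem_filter.1 hα).2
      have e : ∀ β ∈ cls C n α, cls C n β = cls C n α := by
        intro β hβ
        ext δ
        constructor
        · rintro ⟨h1, h2, h3⟩
          exact ⟨h1, h2, fun m => (hβ.2.2 m).trans (h3 m)⟩
        · rintro ⟨h1, h2, h3⟩
          exact ⟨h1, h2, fun m => (hβ.2.2 m).symm.trans (h3 m)⟩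
      refine hα'.trans ?_
      rw [← Set.ncard_coe_finset]
      apply Set.ncard_le_ncard _ (Finset.finite_toSet _)
      intro β hβ
      have := e β hβ
      simp [hs, hX, this, hβ.1, hβ.2.1]; exact hα'
    refine this.trans ((Finset.card_filter_le _ _).trans ?_)
    rw [cnt, Set.ncard_eq_toFinset_card _ hf]

theorem main (C : Set PPerm)
    (hclass : IsPermClass C)
    (hfin : {π : PPerm | π ∈ C ∧ SumIndec π}.Finite)
    (D : ℕ) (hD : 0 < D) (γ : ℝ) (hγ : 1 < γ)
    (hΘ : (fun n => (cnt C n : ℝ)) =Θ[atTop] fun n => (n : ℝ) ^ (D - 1) * γ ^ n) :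
    WilfCollapse C := by
  haveI : Fintype (Let C) := hfin.fintype
  set W := WO hclass with hW
  set S : Set (List (Let C)) := {w | PP w ∈ C} with hS
  have hL : W.Lower S := fun a b h hb => hclass _ _ h hb
  have inj : Function.Injective (PP (C := C)) := fun a b h => PP_inj h
  have hcont : ∀ w m, (W.cont S w m).ncard = {τ : PPerm | τ ∈ C ∧ τ.1 = m ∧ PatternLE (PP w) τ}.ncard := by
    intro w m
    rw [← Set.ncard_image_of_injective _ inj]
    congr 1
    ext τ
    constructor
    · rintro ⟨v, ⟨h1, h2, h3⟩, rfl⟩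
      rw [WO_size] at h2
      exact ⟨h1, h2, h3⟩
    · rintro ⟨h1, h2, h3⟩
      obtain ⟨v, rfl⟩ := PP_surj hclass _ τ rfl h1
      exact ⟨v, ⟨h1, by rw [WO_size]; exact h2, h3⟩, rfl⟩
  have hlev : ∀ m, (W.lev S m).ncard = cnt C m := by
    intro m
    rw [← Set.ncard_image_of_injective _ inj, cnt]
    congr 1
    ext τ
    constructor
    · rintro ⟨v, ⟨h1, h2⟩, rfl⟩
      rw [WO_size] at h2
      exact ⟨h1, h2⟩
    · rintro ⟨h1, h2⟩
      obtain ⟨v, rfl⟩ := PP_surj hclass _ τ rfl h1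
      exact ⟨v, ⟨h1, by rw [WO_size]; exact h2⟩, rfl⟩
  have hΘ' : (fun n : ℕ => ((W.lev S n).ncard : ℝ)) =Θ[atTop] fun n => (n : ℝ) ^ (D - 1) * γ ^ n := by
    simpa only [hlev] using hΘ
  unfold WilfCollapse
  rw [isLittleO_iff]
  intro c hc
  obtain ⟨K, hK⟩ := exists_nat_one_div_lt (half_pos hc)
  filter_upwards [W.word_main (WO_one hclass) hL hγ hD hΘ' K (half_pos hc)] with n hn
  obtain ⟨B, hB, hBc, hBB⟩ := hn
  obtain ⟨M, hM1, hM2⟩ := wilf_bound C n K (PP '' B) (by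
    rintro _ ⟨w, hw, rfl⟩
    have h2 := (hB hw).2
    rw [WO_size] at h2
    exact ⟨(hB hw).1, h2⟩) (by
    intro α h1 h2 h3
    obtain ⟨v, rfl⟩ := PP_surj hclass _ α rfl h1
    obtain ⟨f, hf1, hf2⟩ := hBB v ⟨h1, by rw [WO_size]; exact h2⟩ (fun h => h3 ⟨v, h, rfl⟩)
    have hcard : {j : ℕ | j ≤ K}.ncard = K + 1 := by
      have : {j : ℕ | j ≤ K} = ((Finset.range (K + 1) : Finset ℕ) : Set ℕ) := by
        ext j; simp only [Set.mem_setOf_eq, Finset.coe_range, Set.mem_Iio]; omega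
      rw [this, Set.ncard_coe_finset, Finset.card_range]
    rw [← hcard]
    refine Set.ncard_le_ncard_of_injOn (fun j => PP (f j)) ?_ ?_ ?_
    · intro j hj
      obtain ⟨⟨h4, h5⟩, h6⟩ := hf2 j hj
      rw [WO_size] at h5
      refine ⟨h4, h5, fun m => ?_⟩
      have e1 := avcnt_add C (PP v) m
      have e2 := avcnt_add C (PP (f j)) m
      have e3 := h6 m
      rw [hcont, hcont] at e3
      omega
    · intro i hi j hj hij
      exact hf1 hi hj (inj hij)
    · exact (fin_level C n).subset (fun β h => ⟨h.1, h.2.1⟩))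
  rw [Set.ncard_image_of_injective _ inj] at hM1
  rw [hlev] at hBc
  have hM1' : (wilfcnt C n : ℝ) ≤ B.ncard + M := by exact_mod_cast hM1
  have hM2' : ((K : ℝ) + 1) * M ≤ cnt C n := by exact_mod_cast hM2
  rw [Real.norm_of_nonneg (by positivity), Real.norm_of_nonneg (by positivity)]
  have hK0 : (0 : ℝ) < (K : ℝ) + 1 := by positivity
  have h3 : (M : ℝ) ≤ c / 2 * cnt C n := by
    have h4 : (M : ℝ) ≤ 1 / ((K : ℝ) + 1) * cnt C n := by
      rw [one_div, ← div_eq_inv_mul, le_div_iff₀ hK0]; linarith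
    exact h4.trans (mul_le_mul_of_nonneg_right hK.le (by positivity))
  linarith

end PermLayer


/-- **Proposition `pro-exp`.**  Any permutation class with finitely many
sum-indecomposable permutations whose (dominant) growth rate `γ` is greater than `1`
— equivalently, `c_n = Θ(n^{D−1}·γⁿ)` for some positive integer `D` and some `γ > 1`,
so that `γ` is the exponential growth rate of `C` — exhibits a Wilf collapse. -/
theorem expGrowth_wilfCollapse (C : Set PPerm)
    (hclass : IsPermClass C)
    (hfin : {π : PPerm | π ∈ C ∧ SumIndec π}.Finite)
    (D : ℕ) (hD : 0 < D) (γ : ℝ) (hγ : 1 < γ)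
    (hΘ : (fun n => (cnt C n : ℝ)) =Θ[atTop] fun n => (n : ℝ) ^ (D - 1) * γ ^ n) :
    WilfCollapse C := by
  exact PermLayer.main C hclass hfin D hD γ hγ hΘ
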